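/- Let a, b be two distinct points in the closed unit ball of ℂ². Let f be a real-analytic function on the unit sphere ∂B². Suppose that for every complex line L containing a or b there exists a function F_L continuous on L ∩ cl(B²), holomorphic in L ∩ B², with f = F_L on L ∩ ∂B². Then f ∈ A(∂B²). -/

import Mathlib

open Metric Set

section
open Metric Set
open scoped ENNReal NNReal Topology

theorem ap_local {W F : Type*} [NormedAddCommGroup W] [NormedSpace ℝ W]
    [NormedAddCommGroup F] [NormedSpace ℝ F] [CompleteSpace F]
    {Φ : W → F} {w0 : W} (hΦ : AnalyticAt ℝ Φ w0) (u : W) :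
    ∃ δ > 0, ∀ c ∈ Icc (-δ) δ, ∀ d ∈ Icc (-δ) δ,
      AnalyticAt ℝ (fun w => ∫ τ in c..d, Φ (w + τ • u)) w0 := by
  obtain ⟨p, r, hp⟩ := hΦ
  obtain ⟨r1, hr1, hr1'⟩ := ENNReal.lt_iff_exists_nnreal_btwn.1 hp.r_pos
  have hr1p : 0 < r1 := by exact_mod_cast hr1
  set ρ : ℝ≥0 := r1 / 2 with hρdef
  have hρ : 0 < ρ := by positivity
  have hρρ : (ρ : ℝ≥0∞) + ρ < r := by
    rw [← ENNReal.coe_add, hρdef, add_halves]; exact hr1'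
  have hsum := p.changeOriginSeries_summable_aux₁ (hρρ.trans_le hp.r_le)
  obtain ⟨C, hC⟩ : ∃ C : ℝ≥0, ∀ x : W, ‖x‖₊ ≤ ρ → ∀ n, ‖p.changeOrigin x n‖₊ * ρ ^ n ≤ C := by
    refine ⟨∑' k : ℕ, ∑' s : Σ l : ℕ, { s : Finset (Fin (k + l)) // s.card = l },
      ‖p (k + s.1)‖₊ * ρ ^ s.1 * ρ ^ k, fun x hx n => ?_⟩
    · have hx' : (‖x‖₊ : ℝ≥0∞) < p.radius := by
        refine lt_of_le_of_lt (ENNReal.coe_le_coe.2 hx) (lt_of_lt_of_le ?_ hp.r_le)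
        exact lt_of_le_of_lt le_self_add hρρ
      have h1 := p.nnnorm_changeOrigin_le n hx'
      have h2 := (NNReal.summable_sigma.1 hsum)
      have h3 := p.changeOriginSeries_summable_aux₂ hx' n
      calc _ ≤ (∑' s : Σ l : ℕ, { s : Finset (Fin (n + l)) // s.card = l },
            ‖p (n + s.1)‖₊ * ‖x‖₊ ^ s.1) * ρ ^ n := by gcongr
        _ = ∑' s : Σ l : ℕ, { s : Finset (Fin (n + l)) // s.card = l },
            ‖p (n + s.1)‖₊ * ‖x‖₊ ^ s.1 * ρ ^ n := by rw [NNReal.tsum_mul_right]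
        _ ≤ ∑' s : Σ l : ℕ, { s : Finset (Fin (n + l)) // s.card = l },
            ‖p (n + s.1)‖₊ * ρ ^ s.1 * ρ ^ n := by
              refine Summable.tsum_le_tsum (fun s => by gcongr) (h3.mul_right _) (h2.1 n)
        _ ≤ _ := h2.2.le_tsum n (fun _ _ => zero_le)
  obtain ⟨δ, hδ, hδu⟩ : ∃ δ > 0, ∀ τ : ℝ, |τ| ≤ δ → ‖τ • u‖₊ ≤ ρ := by
    refine ⟨ρ / (‖u‖ + 1), by positivity, fun τ hτ => ?_⟩
    rw [← NNReal.coe_le_coe, coe_nnnorm, norm_smul, Real.norm_eq_abs]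
    calc |τ| * ‖u‖ ≤ ρ / (‖u‖ + 1) * (‖u‖ + 1) := by gcongr; linarith
      _ = ρ := by field_simp
  refine ⟨δ, hδ, fun c hc d hd => ?_⟩
  have habs : ∀ τ ∈ uIcc c d, |τ| ≤ δ := fun τ hτ =>
    abs_le.2 ((uIcc_subset_Icc hc hd) hτ)
  have hcont : ∀ n, ContinuousOn (fun τ : ℝ => p.changeOrigin (τ • u) n) (uIcc c d) := by
    intro n
    have h1 := (p.hasFPowerSeriesOnBall_changeOrigin n (hp.r_pos.trans_le hp.r_le)).continuousOn
    refine h1.comp (by fun_prop) fun τ hτ => ?_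
    rw [mem_eball_zero_iff]
    exact lt_of_le_of_lt (ENNReal.coe_le_coe.2 (hδu τ (habs τ hτ)))
      (lt_of_lt_of_le (lt_of_le_of_lt le_self_add hρρ) hp.r_le)
  set I : FormalMultilinearSeries ℝ W F := fun n => ∫ τ in c..d, p.changeOrigin (τ • u) n with hI
  refine ⟨I, ρ, ?_, by exact_mod_cast hρ, ?_⟩
  · refine I.le_radius_of_bound (C * |d - c|) fun n => ?_
    have : ‖I n‖ ≤ C / ρ ^ n * |d - c| := by
      refine intervalIntegral.norm_integral_le_of_norm_le_const fun τ hτ => ?_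
      rw [le_div_iff₀ (by positivity)]
      exact_mod_cast hC _ (hδu τ (habs τ (uIoc_subset_uIcc hτ))) n
    calc _ ≤ C / ρ ^ n * |d - c| * ρ ^ n := by gcongr
      _ = _ := by have : (ρ : ℝ) ≠ 0 := by positivity
                  field_simp
  · intro y hy
    have hy' : ‖y‖ < ρ := by
      rw [mem_eball_zero_iff] at hy
      exact_mod_cast (show ‖y‖₊ < ρ by exact_mod_cast hy)
    have e1 : ∀ n, I n (fun _ => y) = ∫ τ in c..d, p.changeOrigin (τ • u) n (fun _ => y) := by
      intro n
      exact ((ContinuousMultilinearMap.apply ℝ (fun _ : Fin n => W) F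
        (fun _ => y)).intervalIntegral_comp_comm (hcont n).intervalIntegrable).symm
    simp only [e1]
    refine intervalIntegral.hasSum_integral_of_dominated_convergence
      (fun n _ => C * (‖y‖ / ρ) ^ n) ?_ ?_ ?_ ?_ ?_
    · intro n
      have := (ContinuousMultilinearMap.apply ℝ (fun _ : Fin n => W) F
        (fun _ => y)).continuous.comp_continuousOn (hcont n)
      exact (this.mono uIoc_subset_uIcc).aestronglyMeasurable measurableSet_uIoc
    · intro n
      refine Filter.Eventually.of_forall fun τ hτ => ?_
      have h1 : ‖p.changeOrigin (τ • u) n‖ * ρ ^ n ≤ C := by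
        exact_mod_cast hC _ (hδu τ (habs τ (uIoc_subset_uIcc hτ))) n
      calc _ ≤ ‖p.changeOrigin (τ • u) n‖ * ∏ _i : Fin n, ‖y‖ :=
            ContinuousMultilinearMap.le_opNorm _ _
        _ = ‖p.changeOrigin (τ • u) n‖ * ρ ^ n * (‖y‖ / ρ) ^ n := by
            have : (ρ : ℝ) ≠ 0 := by positivity
            rw [div_pow, Finset.prod_const, Finset.card_univ, Fintype.card_fin]; field_simp
        _ ≤ _ := by gcongr
    · refine Filter.Eventually.of_forall fun τ hτ => Summable.mul_left _ ?_
      exact summable_geometric_of_lt_one (by positivity) ((div_lt_one (by positivity)).2 hy')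
    · exact intervalIntegrable_const
    · refine Filter.Eventually.of_forall fun τ hτ => ?_
      have hu := hδu τ (habs τ (uIoc_subset_uIcc hτ))
      have h1 := hp.changeOrigin (y := τ • u)
        (lt_of_le_of_lt (ENNReal.coe_le_coe.2 hu) (lt_of_le_of_lt le_self_add hρρ))
      have := h1.hasSum (y := y) ?_
      · convert this using 2
        abel
      · rw [mem_eball_zero_iff] at hy ⊢
        refine hy.trans (lt_tsub_iff_right.2 (lt_of_le_of_lt ?_ hρρ))
        gcongr

theorem ap {E F : Type*} [NormedAddCommGroup E] [NormedSpace ℝ E]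
    [NormedAddCommGroup F] [NormedSpace ℝ F] [CompleteSpace F]
    {Φ : ℝ × E → F} (hΦ : ∀ y, AnalyticAt ℝ Φ y) (a b : ℝ) (x0 : E) :
    AnalyticAt ℝ (fun x => ∫ θ in a..b, Φ (θ, x)) x0 := by
  have hc : Continuous Φ := continuous_iff_continuousAt.2 fun y => (hΦ y).continuousAt
  have hii : ∀ (x : E) (c d : ℝ), IntervalIntegrable (fun θ => Φ (θ, x)) MeasureTheory.volume c d :=
    fun x c d => Continuous.intervalIntegrable (by fun_prop) _ _
  have hloc : ∀ θ0 : ℝ, ∃ δ > 0, ∀ c ∈ ball θ0 δ,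
      AnalyticAt ℝ (fun x => ∫ θ in θ0..c, Φ (θ, x)) x0 := by
    intro θ0
    obtain ⟨δ, hδ, h⟩ := ap_local (hΦ (θ0, x0)) ((1 : ℝ), (0 : E))
    refine ⟨δ, hδ, fun c hc => ?_⟩
    have hc' : |c - θ0| < δ := by simpa [Real.dist_eq] using hc
    have h1 := h 0 ⟨by linarith, hδ.le⟩ (c - θ0) ⟨by linarith [(abs_lt.1 hc').1], (abs_lt.1 hc').2.le⟩
    have h2 : AnalyticAt ℝ (fun x : E => ((θ0, x) : ℝ × E)) x0 := by fun_prop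
    have h3 := AnalyticAt.fun_comp (f := fun x : E => ((θ0, x) : ℝ × E)) h1 h2
    refine h3.congr (Filter.Eventually.of_forall fun x => ?_)
    simp only [Prod.smul_mk, Prod.mk_add_mk, smul_eq_mul, mul_one, smul_zero, add_zero]
    have := intervalIntegral.integral_comp_add_left (a := 0) (b := c - θ0) (fun θ => Φ (θ, x)) θ0
    simpa using this
  set A : Set ℝ := {c | AnalyticAt ℝ (fun x => ∫ θ in a..c, Φ (θ, x)) x0} with hA
  have key : ∀ θ0 : ℝ, ∃ δ > 0, ∀ c ∈ ball θ0 δ, (c ∈ A ↔ θ0 ∈ A) := by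
    intro θ0
    obtain ⟨δ, hδ, h⟩ := hloc θ0
    refine ⟨δ, hδ, fun c hc => ⟨fun h1 => ?_, fun h1 => ?_⟩⟩
    · refine (AnalyticAt.sub h1 (h c hc)).congr (Filter.Eventually.of_forall fun x => ?_)
      have := intervalIntegral.integral_add_adjacent_intervals (hii x a θ0) (hii x θ0 c)
      simp only [Pi.sub_apply, ← this]; abel
    · refine (AnalyticAt.add h1 (h c hc)).congr (Filter.Eventually.of_forall fun x => ?_)
      exact intervalIntegral.integral_add_adjacent_intervals (hii x a θ0) (hii x θ0 c)
  have hopen : IsOpen A := by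
    rw [Metric.isOpen_iff]
    intro θ0 h0
    obtain ⟨δ, hδ, h⟩ := key θ0
    exact ⟨δ, hδ, fun c hc => (h c hc).2 h0⟩
  have hclosed : IsClosed A := by
    rw [← isOpen_compl_iff, Metric.isOpen_iff]
    intro θ0 h0
    obtain ⟨δ, hδ, h⟩ := key θ0
    exact ⟨δ, hδ, fun c hc h1 => h0 ((h c hc).1 h1)⟩
  have haA : a ∈ A := by
    simp only [hA, mem_ofPred_eq, intervalIntegral.integral_same]; exact analyticAt_const
  have : A = univ := IsClopen.eq_univ ⟨hclosed, hopen⟩ ⟨a, haA⟩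
  have hb : b ∈ A := by rw [this]; trivial
  exact hb

theorem di {E F : Type*} [NormedAddCommGroup E] [NormedSpace ℝ E] [ProperSpace E]
    [NormedAddCommGroup F] [NormedSpace ℝ F] [CompleteSpace F]
    {Φ : ℝ × E → F} (hΦ : ∀ y, AnalyticAt ℝ Φ y) (a b : ℝ) (x0 : E) :
    HasFDerivAt (fun x => ∫ θ in a..b, Φ (θ, x))
      (∫ θ in a..b, fderiv ℝ (fun x => Φ (θ, x)) x0) x0 := by
  have hc : Continuous Φ := continuous_iff_continuousAt.2 fun y => (hΦ y).continuousAt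
  have hd : ∀ y, DifferentiableAt ℝ Φ y := fun y => (hΦ y).differentiableAt
  have e : ∀ θ x, fderiv ℝ (fun x => Φ (θ, x)) x =
      (fderiv ℝ Φ (θ, x)).comp (ContinuousLinearMap.inr ℝ ℝ E) := by
    intro θ x
    have := (hd (θ, x)).hasFDerivAt.comp x (hasFDerivAt_prodMk_right θ x)
    exact this.fderiv
  have hcd : Continuous (fderiv ℝ Φ) :=
    continuous_iff_continuousAt.2 fun y => (hΦ y).fderiv.continuousAt
  have hcd' : Continuous (fun y : ℝ × E => fderiv ℝ (fun x => Φ (y.1, x)) y.2) := by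
    simp only [e]; fun_prop
  obtain ⟨C, hC⟩ := ((isCompact_uIcc (a := a) (b := b)).prod
    (isCompact_closedBall x0 1)).exists_bound_of_continuousOn hcd'.continuousOn
  have := intervalIntegral.hasFDerivAt_integral_of_dominated_of_fderiv_le
    (μ := MeasureTheory.volume) (F := fun x θ => Φ (θ, x))
    (F' := fun x θ => fderiv ℝ (fun x => Φ (θ, x)) x) (x₀ := x0) (a := a) (b := b)
    (bound := fun _ => C) (s := ball x0 1) (ball_mem_nhds x0 one_pos) ?_ ?_ ?_ ?_ ?_ ?_
  · exact this
  · exact Filter.Eventually.of_forall fun x =>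
      (show Continuous fun θ => Φ (θ, x) by fun_prop).aestronglyMeasurable
  · exact Continuous.intervalIntegrable (by fun_prop) _ _
  · have : Continuous fun θ => fderiv ℝ (fun x => Φ (θ, x)) x0 :=
      hcd'.comp (by fun_prop : Continuous fun θ : ℝ => (θ, x0))
    exact this.aestronglyMeasurable
  · exact Filter.Eventually.of_forall fun θ hθ x hx =>
      hC (θ, x) ⟨uIoc_subset_uIcc hθ, ball_subset_closedBall hx⟩
  · exact intervalIntegrable_const
  · refine Filter.Eventually.of_forall fun θ hθ x hx => ?_
    have := (hd (θ, x)).comp x (hasFDerivAt_prodMk_right θ x).differentiableAt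
    exact this.hasFDerivAt

theorem di_apply {E F : Type*} [NormedAddCommGroup E] [NormedSpace ℝ E] [ProperSpace E]
    [NormedAddCommGroup F] [NormedSpace ℝ F] [CompleteSpace F]
    {Φ : ℝ × E → F} (hΦ : ∀ y, AnalyticAt ℝ Φ y) (a b : ℝ) (x0 e : E) :
    fderiv ℝ (fun x => ∫ θ in a..b, Φ (θ, x)) x0 e =
      ∫ θ in a..b, fderiv ℝ (fun x => Φ (θ, x)) x0 e := by
  rw [(di hΦ a b x0).fderiv, ContinuousLinearMap.intervalIntegral_apply]
  have hd : ∀ y, DifferentiableAt ℝ Φ y := fun y => (hΦ y).differentiableAt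
  have hcd : Continuous (fderiv ℝ Φ) :=
    continuous_iff_continuousAt.2 fun y => (hΦ y).fderiv.continuousAt
  have e : ∀ θ x, fderiv ℝ (fun x => Φ (θ, x)) x =
      (fderiv ℝ Φ (θ, x)).comp (ContinuousLinearMap.inr ℝ ℝ E) := by
    intro θ x
    have := (hd (θ, x)).hasFDerivAt.comp x (hasFDerivAt_prodMk_right θ x)
    exact this.fderiv
  refine Continuous.intervalIntegrable ?_ _ _
  simp only [e]; fun_prop
end

section
open Metric Set
open scoped ENNReal NNReal Topology ContDiff ComplexConjugate

noncomputable def dz (h : ℂ → ℂ) (l : ℂ) : ℂ :=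
  (1 / 2) * (fderiv ℝ h l 1 - Complex.I * fderiv ℝ h l Complex.I)

noncomputable def dzb (h : ℂ → ℂ) (l : ℂ) : ℂ :=
  (1 / 2) * (fderiv ℝ h l 1 + Complex.I * fderiv ℝ h l Complex.I)

def An {E : Type*} [NormedAddCommGroup E] [NormedSpace ℝ E] (h : E → ℂ) : Prop :=
  ∀ x, AnalyticAt ℝ h x

theorem an_iff {E : Type*} [NormedAddCommGroup E] [NormedSpace ℝ E] (h : E → ℂ) :
    An h ↔ ContDiff ℝ ω h := by
  rw [contDiff_omega_iff_analyticOnNhd]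
  simp [An, AnalyticOnNhd]

theorem clm_c (A : ℂ →L[ℝ] ℂ) (e : ℂ) :
    A e = e * ((1 / 2) * (A 1 - Complex.I * A Complex.I)) +
      conj e * ((1 / 2) * (A 1 + Complex.I * A Complex.I)) := by
  have h : e = e.re • (1 : ℂ) + e.im • Complex.I := by
    simp [Complex.re_add_im]
  have h1 : A e = e.re * A 1 + e.im * A Complex.I := by
    conv_lhs => rw [h]
    rw [map_add, map_smul, map_smul]; simp
  have h2 : e = e.re + e.im * Complex.I := (Complex.re_add_im e).symm
  have h3 : conj e = e.re - e.im * Complex.I := by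
    apply Complex.ext <;> simp
  rw [h1, h3]
  conv_rhs => enter [1, 1]; rw [h2]
  linear_combination (e.im * A Complex.I) * Complex.I_sq

theorem fderiv_dz (h : ℂ → ℂ) (l e : ℂ) :
    fderiv ℝ h l e = e * dz h l + conj e * dzb h l := clm_c _ e

theorem dz_at {h : ℂ → ℂ} {l : ℂ} (hh : AnalyticAt ℝ h l) : AnalyticAt ℝ (dz h) l := by
  have := hh.fderiv
  unfold dz
  have h1 : AnalyticAt ℝ (fun l => fderiv ℝ h l 1) l :=
    ((ContinuousLinearMap.apply ℝ ℂ (1 : ℂ)).analyticAt _).fun_comp this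
  have h2 : AnalyticAt ℝ (fun l => fderiv ℝ h l Complex.I) l :=
    ((ContinuousLinearMap.apply ℝ ℂ (Complex.I : ℂ)).analyticAt _).fun_comp this
  fun_prop

theorem dzb_at {h : ℂ → ℂ} {l : ℂ} (hh : AnalyticAt ℝ h l) : AnalyticAt ℝ (dzb h) l := by
  have := hh.fderiv
  unfold dzb
  have h1 : AnalyticAt ℝ (fun l => fderiv ℝ h l 1) l :=
    ((ContinuousLinearMap.apply ℝ ℂ (1 : ℂ)).analyticAt _).fun_comp this
  have h2 : AnalyticAt ℝ (fun l => fderiv ℝ h l Complex.I) l :=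
    ((ContinuousLinearMap.apply ℝ ℂ (Complex.I : ℂ)).analyticAt _).fun_comp this
  fun_prop

theorem An.dz {h : ℂ → ℂ} (hh : An h) : An (dz h) := fun x => dz_at (hh x)
theorem An.dzb {h : ℂ → ℂ} (hh : An h) : An (dzb h) := fun x => dzb_at (hh x)

theorem dz_dzb_comm {h : ℂ → ℂ} (hh : An h) : dz (dzb h) = dzb (dz h) := by
  funext l
  have hf : DifferentiableAt ℝ (fderiv ℝ h) l := (hh l).fderiv.differentiableAt
  have hs : IsSymmSndFDerivAt ℝ h l := by
    refine (((an_iff h).1 hh).contDiffAt).isSymmSndFDerivAt ?_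
    simp
  have e : ∀ (c v : ℂ), fderiv ℝ (fun l => fderiv ℝ h l c) l v = fderiv ℝ (fderiv ℝ h) l v c := by
    intro c v
    have := ((ContinuousLinearMap.apply ℝ ℂ c).hasFDerivAt.comp l hf.hasFDerivAt).fderiv
    have h2 : (fun l => fderiv ℝ h l c) = (ContinuousLinearMap.apply ℝ ℂ c) ∘ fderiv ℝ h := rfl
    rw [h2, this]; rfl
  have d : ∀ c, DifferentiableAt ℝ (fun l => fderiv ℝ h l c) l := fun c => by fun_prop
  have a1 : ∀ v, fderiv ℝ (dzb h) l v = (1 / 2) * (fderiv ℝ (fderiv ℝ h) l v 1 +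
      Complex.I * fderiv ℝ (fderiv ℝ h) l v Complex.I) := by
    intro v
    have := (((d 1).hasFDerivAt.add ((d Complex.I).hasFDerivAt.const_mul Complex.I)).const_mul
      (1 / 2 : ℂ)).fderiv
    have h2 : dzb h = fun y => (1 / 2 : ℂ) * ((fun l => fderiv ℝ h l 1) y +
      Complex.I * (fun l => fderiv ℝ h l Complex.I) y) := rfl
    rw [h2]
    refine (congrArg (fun A => A v) this).trans ?_
    simp [e, mul_add, mul_sub]
  have a2 : ∀ v, fderiv ℝ (dz h) l v = (1 / 2) * (fderiv ℝ (fderiv ℝ h) l v 1 -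
      Complex.I * fderiv ℝ (fderiv ℝ h) l v Complex.I) := by
    intro v
    have := (((d 1).hasFDerivAt.sub ((d Complex.I).hasFDerivAt.const_mul Complex.I)).const_mul
      (1 / 2 : ℂ)).fderiv
    have h2 : dz h = fun y => (1 / 2 : ℂ) * ((fun l => fderiv ℝ h l 1) y -
      Complex.I * (fun l => fderiv ℝ h l Complex.I) y) := rfl
    rw [h2]
    refine (congrArg (fun A => A v) this).trans ?_
    simp [e, mul_add, mul_sub]
  have s := hs 1 Complex.I
  rw [dz, dzb, a1, a1, a2, a2, s]
  ring

theorem dz_comm_iter {h : ℂ → ℂ} (hh : An h) (n : ℕ) : dz (dzb^[n] h) = dzb^[n] (dz h) := by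
  induction n generalizing h with
  | zero => rfl
  | succ n ih => rw [Function.iterate_succ_apply, Function.iterate_succ_apply, ih hh.dzb,
      dz_dzb_comm hh]

noncomputable def QQ (m : ℤ) (q : ℂ → ℂ) (r : ℝ) : ℂ :=
  ∫ φ in (0 : ℝ)..(2 * Real.pi), q (r * Complex.exp (φ * Complex.I)) *
    Complex.exp (-(m * φ * Complex.I))

theorem QQ_int {m : ℤ} {q : ℂ → ℂ} (hq : An q) :
    An (fun y : ℝ × ℝ => q (y.2 * Complex.exp (y.1 * Complex.I)) *
    Complex.exp (-(m * y.1 * Complex.I))) := by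
  rw [an_iff] at *
  have h1 : ContDiff ℝ ω (fun y : ℝ => (y : ℂ)) := Complex.ofRealCLM.contDiff
  have h2 : ContDiff ℝ ω (fun y : ℝ × ℝ => (y.1 : ℂ)) := h1.comp contDiff_fst
  have h3 : ContDiff ℝ ω (fun y : ℝ × ℝ => (y.2 : ℂ)) := h1.comp contDiff_snd
  fun_prop

theorem QQ_an {m : ℤ} {q : ℂ → ℂ} (hq : An q) : An (QQ m q) := fun r =>
  ap (QQ_int (m := m) hq) 0 (2 * Real.pi) r

theorem exp_int_zero {m : ℤ} (hm : m ≠ 0) :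
    ∫ φ in (0 : ℝ)..(2 * Real.pi), Complex.exp (-(m * φ * Complex.I)) = 0 := by
  have hc : (-(m * Complex.I) : ℂ) ≠ 0 := by simp [hm]
  have := integral_exp_mul_complex (a := 0) (b := 2 * Real.pi) hc
  have e : ∀ φ : ℝ, Complex.exp (-(m * φ * Complex.I)) = Complex.exp (-(m * Complex.I) * φ) := by
    intro φ; congr 1; ring
  simp only [e, this]
  have : Complex.exp (-(m * Complex.I) * ((2 * Real.pi : ℝ) : ℂ)) = 1 := by
    rw [Complex.exp_eq_one_iff]
    exact ⟨-m, by push_cast; ring⟩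
  rw [this]; simp

theorem QQ_zero {m : ℤ} {q : ℂ → ℂ} (h : m ≠ 0 ∨ q 0 = 0) : QQ m q 0 = 0 := by
  unfold QQ
  rcases h with h | h
  · simp [exp_int_zero h]
  · simp [h]

theorem QQ_deriv {m : ℤ} {q : ℂ → ℂ} (hq : An q) :
    deriv (QQ m q) = QQ (m - 1) (dz q) + QQ (m + 1) (dzb q) := by
  funext r
  have h1 := di_apply (QQ_int (m := m) hq) 0 (2 * Real.pi) r 1
  have h2 : deriv (QQ m q) r = fderiv ℝ (QQ m q) r 1 := by simp
  rw [h2]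
  refine h1.trans ?_
  rw [Pi.add_apply, QQ, QQ, ← intervalIntegral.integral_add]
  · refine intervalIntegral.integral_congr fun φ _ => ?_
    simp only
    have a1 : HasDerivAt (fun r : ℝ => (r * Complex.exp (φ * Complex.I) : ℂ))
        (Complex.exp (φ * Complex.I)) r := by
      simpa using (Complex.ofRealCLM.hasDerivAt (x := r)).mul_const (Complex.exp (φ * Complex.I))
    have a2 := ((hq (r * Complex.exp (φ * Complex.I))).differentiableAt.hasFDerivAt.comp_hasDerivAt
      r a1).mul_const (Complex.exp (-(m * φ * Complex.I)))
    rw [fderiv_apply_one_eq_deriv]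
    refine a2.deriv.trans ?_
    rw [fderiv_dz, ← Complex.exp_conj]
    have e1 : Complex.exp (-(((m - 1 : ℤ) : ℂ) * φ * Complex.I)) =
      Complex.exp (-(m * φ * Complex.I)) * Complex.exp (φ * Complex.I) := by
      rw [← Complex.exp_add]; congr 1; push_cast; ring
    have e2 : Complex.exp (-(((m + 1 : ℤ) : ℂ) * φ * Complex.I)) =
      Complex.exp (-(m * φ * Complex.I)) * Complex.exp (conj (φ * Complex.I)) := by
      rw [← Complex.exp_add]; congr 1; simp; ring
    rw [e1, e2]; ring
  · have := ((an_iff _).1 (QQ_int (m := m - 1) hq.dz)).continuous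
    exact (this.comp (by fun_prop : Continuous fun φ : ℝ => (φ, r))).intervalIntegrable _ _
  · have := ((an_iff _).1 (QQ_int (m := m + 1) hq.dzb)).continuous
    exact (this.comp (by fun_prop : Continuous fun φ : ℝ => (φ, r))).intervalIntegrable _ _

theorem QQ_iter_succ {m : ℤ} {q : ℂ → ℂ} (hq : An q) (N : ℕ) (r : ℝ) :
    iteratedDeriv (N + 1) (QQ m q) r = iteratedDeriv N (QQ (m - 1) (dz q)) r +
      iteratedDeriv N (QQ (m + 1) (dzb q)) r := by
  rw [iteratedDeriv_succ', QQ_deriv hq]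
  refine iteratedDeriv_add ?_ ?_
  · exact ((QQ_an hq.dz) r).contDiffAt
  · exact ((QQ_an hq.dzb) r).contDiffAt

theorem QQ_low {m : ℤ} {q : ℂ → ℂ} (hq : An q) (N : ℕ) (hN : (N : ℤ) < |m|) :
    iteratedDeriv N (QQ m q) 0 = 0 := by
  induction N generalizing m q with
  | zero =>
    rw [iteratedDeriv_zero]
    exact QQ_zero (Or.inl (by rintro rfl; simp at hN))
  | succ N ih =>
    rw [QQ_iter_succ hq, ih hq.dz, ih hq.dzb, add_zero]
    · push_cast at hN; rw [lt_abs] at *; omega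
    · push_cast at hN; rw [lt_abs] at *; omega

theorem QQ_high {m d : ℤ} {q : ℂ → ℂ} (hq : An q)
    (h : ∀ l n : ℕ, d < l → dz^[l] (dzb^[n] q) 0 = 0) (N : ℕ) (hN : 2 * d - m < N) :
    iteratedDeriv N (QQ m q) 0 = 0 := by
  induction N generalizing m d q with
  | zero =>
    rw [iteratedDeriv_zero]
    refine QQ_zero ?_
    by_cases hm : m = 0
    · right
      exact h 0 0 (by push_cast at *; omega)
    · exact Or.inl hm
  | succ N ih =>
    push_cast at hN
    rw [QQ_iter_succ hq, ih (d := d - 1) hq.dz, ih (d := d) hq.dzb, add_zero]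
    · intro l n hl
      exact h l (n + 1) hl
    · omega
    · intro l n hl
      rw [← dz_comm_iter hq]
      exact h (l + 1) n (by push_cast; omega)
    · omega
end

section
open Metric Set Filter
open scoped ENNReal NNReal Topology ContDiff ComplexConjugate

theorem jet_coeff {Q : ℝ → ℂ} {p : FormalMultilinearSeries ℝ ℝ ℂ} {r : ℝ≥0∞}
    (h : HasFPowerSeriesOnBall Q p 0 r) (n : ℕ) (y : ℝ) :
    p n (fun _ => y) = iteratedDeriv n Q 0 / n.factorial * (y : ℂ) ^ n := by
  have h1 := h.factorial_smul y n
  have h2 : iteratedFDeriv ℝ n Q 0 (fun _ => y) = y ^ n • iteratedDeriv n Q 0 := by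
    rw [iteratedFDeriv_apply_eq_iteratedDeriv_mul_prod]; simp
  rw [h2] at h1
  have h3 : (n.factorial : ℂ) ≠ 0 := by exact_mod_cast n.factorial_ne_zero
  rw [nsmul_eq_mul, Complex.real_smul] at h1
  field_simp
  rw [mul_comm, h1]; push_cast; ring

theorem jet_small {Q : ℝ → ℂ} (hQ : An Q) (n : ℕ) (h : ∀ N < n, iteratedDeriv N Q 0 = 0) :
    Q =O[𝓝 0] fun y => ‖y‖ ^ n := by
  obtain ⟨p, r, hp⟩ := hQ 0
  have h1 := hp.hasFPowerSeriesAt.isBigO_sub_partialSum_pow n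
  refine h1.congr_left fun y => ?_
  rw [FormalMultilinearSeries.partialSum, Finset.sum_eq_zero, zero_add, sub_zero]
  intro N hN
  rw [jet_coeff hp, h N (Finset.mem_range.1 hN)]; simp

theorem jet_poly {Q : ℝ → ℂ} (hQ : An Q) (n M : ℕ) (h1 : ∀ N < n, iteratedDeriv N Q 0 = 0)
    (h2 : ∀ N, M < N → iteratedDeriv N Q 0 = 0) :
    ∃ P : Polynomial ℂ, ∀ r : ℝ, Q r = (r : ℂ) ^ n * P.eval (r : ℂ) := by
  classical
  set P : Polynomial ℂ := ∑ N ∈ Finset.range (M + 1), Polynomial.C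
    (iteratedDeriv (n + N) Q 0 / (n + N).factorial) * Polynomial.X ^ N with hP
  refine ⟨P, fun r => ?_⟩
  have hev : ∀ r : ℂ, r ^ n * P.eval r = ∑ N ∈ Finset.range (M + 1),
      iteratedDeriv (n + N) Q 0 / (n + N).factorial * r ^ (n + N) := by
    intro r
    rw [hP, Polynomial.eval_finsetSum, Finset.mul_sum]
    refine Finset.sum_congr rfl fun N _ => ?_
    simp; ring
  have : Q = fun r : ℝ => (r : ℂ) ^ n * P.eval (r : ℂ) := by
    refine AnalyticOnNhd.eq_of_eventuallyEq (𝕜 := ℝ) (z₀ := 0) (fun x _ => hQ x) ?_ ?_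
    · have : ContDiff ℝ ω (fun r : ℝ => (r : ℂ) ^ n * P.eval (r : ℂ)) := by
        simp only [hev]
        have h1 : ContDiff ℝ ω (fun y : ℝ => (y : ℂ)) := Complex.ofRealCLM.contDiff
        fun_prop
      exact contDiff_omega_iff_analyticOnNhd.1 this
    · obtain ⟨p, r, hp⟩ := hQ 0
      filter_upwards [Metric.eball_mem_nhds (0 : ℝ) hp.r_pos] with y hy
      have h3 := hp.hasSum hy
      rw [zero_add] at h3
      rw [hev]
      simp only [jet_coeff hp] at h3
      have hm := Finset.sum_map (Finset.range (M + 1)) (addLeftEmbedding n)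
        (fun N => iteratedDeriv N Q 0 / N.factorial * (y : ℂ) ^ N)
      simp only [addLeftEmbedding_apply] at hm
      rw [← hm]
      refine h3.unique (hasSum_sum_of_ne_finset_zero fun N hN => ?_)
      have : iteratedDeriv N Q 0 = 0 := by
        by_cases hNn : N < n
        · exact h1 N hNn
        · refine h2 N ?_
          by_contra hcon
          apply hN
          simp only [Finset.mem_map, Finset.mem_range, addLeftEmbedding_apply]
          exact ⟨N - n, by omega, by omega⟩
      rw [this]; simp
  exact congrFun this r

theorem Q_mono {Q : ℝ → ℂ} (hQ : An Q) (k : ℤ) (M : ℕ)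
    (h1 : ∀ N : ℕ, (N : ℤ) < |k| → iteratedDeriv N Q 0 = 0)
    (h2 : ∀ N, M < N → iteratedDeriv N Q 0 = 0)
    (hO : Q =O[atTop] fun r : ℝ => r ^ k) :
    (0 ≤ k → ∃ c : ℂ, ∀ r : ℝ, Q r = c * (r : ℂ) ^ k.toNat) ∧ (k < 0 → ∀ r, Q r = 0) := by
  obtain ⟨P, hP⟩ := jet_poly hQ k.natAbs M (fun N hN => h1 N (by rw [Int.abs_eq_natAbs]; exact_mod_cast hN)) h2
  have hbd : (fun r : ℝ => P.eval (r : ℂ)) =O[atTop] fun r : ℝ => r ^ (k - k.natAbs) := by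
    have h0 : (fun r : ℝ => ((r : ℂ) ^ k.natAbs)⁻¹) =O[atTop]
        (fun r : ℝ => (r ^ k.natAbs)⁻¹) :=
      Asymptotics.IsBigO.of_bound 1 (Eventually.of_forall fun r => by simp)
    have := hO.mul h0
    refine (this.congr' ?_ (EventuallyEq.refl _ _)).trans (Asymptotics.IsBigO.of_bound 1 ?_)
    · filter_upwards [eventually_gt_atTop 0] with r hr
      have : (r : ℂ) ≠ 0 := by exact_mod_cast hr.ne'
      rw [hP]; field_simp
    · filter_upwards [eventually_gt_atTop 0] with r hr
      rw [zpow_sub₀ hr.ne', zpow_natCast]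
      simp [div_eq_mul_inv]
  have hle : (fun r : ℝ => r ^ (k - k.natAbs)) =O[atTop] fun _ => (1 : ℝ) := by
    refine Asymptotics.IsBigO.of_bound 1 ?_
    filter_upwards [eventually_ge_atTop 1] with r hr
    simp only [norm_zpow, norm_one, mul_one]
    refine zpow_le_one_of_nonpos₀ (by rw [Real.norm_of_nonneg (by linarith)]; exact hr) (by omega)
  have hdeg : ¬ 0 < P.degree := by
    intro hd
    have hz : Tendsto (fun r : ℝ => ‖(r : ℂ)‖) atTop atTop := by
      simpa using tendsto_abs_atTop_atTop
    have h3 := P.tendsto_norm_atTop hd hz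
    have h4 := (hbd.trans hle)
    rw [Asymptotics.isBigO_one_iff] at h4
    exact (not_isBoundedUnder_of_tendsto_atTop h3) h4
  rw [not_lt] at hdeg
  have hc := Polynomial.eq_C_of_degree_le_zero hdeg
  refine ⟨fun hk => ⟨P.coeff 0, fun r => ?_⟩, fun hk r => ?_⟩
  · rw [hP, hc, Polynomial.eval_C]
    have : k.natAbs = k.toNat := by omega
    rw [this]; simp; ring
  · have : P.coeff 0 = 0 := by
      have h5 : Tendsto (fun r : ℝ => r ^ (k - k.natAbs)) atTop (𝓝 0) :=
        tendsto_zpow_atTop_zero (by omega)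
      have h6 := hbd.trans_tendsto h5
      rw [hc] at h6
      simp only [Polynomial.eval_C] at h6
      exact tendsto_nhds_unique tendsto_const_nhds h6
    rw [hP, hc, this]; simp
end

section
open Metric Set Filter
open scoped ENNReal NNReal Topology ContDiff ComplexConjugate

noncomputable def d1 (G : ℂ × ℂ → ℂ) (z : ℂ × ℂ) : ℂ :=
  (1 / 2) * (fderiv ℝ G z (1, 0) - Complex.I * fderiv ℝ G z (Complex.I, 0))
noncomputable def db1 (G : ℂ × ℂ → ℂ) (z : ℂ × ℂ) : ℂ :=
  (1 / 2) * (fderiv ℝ G z (1, 0) + Complex.I * fderiv ℝ G z (Complex.I, 0))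
noncomputable def d2 (G : ℂ × ℂ → ℂ) (z : ℂ × ℂ) : ℂ :=
  (1 / 2) * (fderiv ℝ G z (0, 1) - Complex.I * fderiv ℝ G z (0, Complex.I))
noncomputable def db2 (G : ℂ × ℂ → ℂ) (z : ℂ × ℂ) : ℂ :=
  (1 / 2) * (fderiv ℝ G z (0, 1) + Complex.I * fderiv ℝ G z (0, Complex.I))

noncomputable def LL (G : ℂ × ℂ → ℂ) (z : ℂ × ℂ) : ℂ := z.2 * db1 G z - z.1 * db2 G z
noncomputable def LP (G : ℂ × ℂ → ℂ) (z : ℂ × ℂ) : ℂ := (conj z.1) ^ 2 * LL G z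

theorem fderiv_d (G : ℂ × ℂ → ℂ) (z : ℂ × ℂ) (u v : ℂ) :
    fderiv ℝ G z (u, v) = u * d1 G z + conj u * db1 G z + v * d2 G z + conj v * db2 G z := by
  have h1 := clm_c ((fderiv ℝ G z).comp (ContinuousLinearMap.inl ℝ ℂ ℂ)) u
  have h2 := clm_c ((fderiv ℝ G z).comp (ContinuousLinearMap.inr ℝ ℂ ℂ)) v
  have h3 : ((u, v) : ℂ × ℂ) = (u, 0) + (0, v) := by simp
  simp only [ContinuousLinearMap.comp_apply, ContinuousLinearMap.inl_apply,
    ContinuousLinearMap.inr_apply] at h1 h2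
  rw [h3, map_add, h1, h2, d1, db1, d2, db2]
  ring

theorem fd_at {G : ℂ × ℂ → ℂ} {z : ℂ × ℂ} (h : AnalyticAt ℝ G z) (w : ℂ × ℂ) :
    AnalyticAt ℝ (fun z => fderiv ℝ G z w) z :=
  ((ContinuousLinearMap.apply ℝ ℂ w).analyticAt _).fun_comp h.fderiv

theorem d1_at {G : ℂ × ℂ → ℂ} {z : ℂ × ℂ} (h : AnalyticAt ℝ G z) : AnalyticAt ℝ (d1 G) z :=
  analyticAt_const.mul ((fd_at h _).sub (analyticAt_const.mul (fd_at h _)))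
theorem db1_at {G : ℂ × ℂ → ℂ} {z : ℂ × ℂ} (h : AnalyticAt ℝ G z) : AnalyticAt ℝ (db1 G) z :=
  analyticAt_const.mul ((fd_at h _).add (analyticAt_const.mul (fd_at h _)))
theorem d2_at {G : ℂ × ℂ → ℂ} {z : ℂ × ℂ} (h : AnalyticAt ℝ G z) : AnalyticAt ℝ (d2 G) z :=
  analyticAt_const.mul ((fd_at h _).sub (analyticAt_const.mul (fd_at h _)))
theorem db2_at {G : ℂ × ℂ → ℂ} {z : ℂ × ℂ} (h : AnalyticAt ℝ G z) : AnalyticAt ℝ (db2 G) z :=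
  analyticAt_const.mul ((fd_at h _).add (analyticAt_const.mul (fd_at h _)))

theorem LL_at {G : ℂ × ℂ → ℂ} {z : ℂ × ℂ} (h : AnalyticAt ℝ G z) : AnalyticAt ℝ (LL G) z :=
  (analyticAt_snd.mul (db1_at h)).sub (analyticAt_fst.mul (db2_at h))
theorem conj1_at (z : ℂ × ℂ) : AnalyticAt ℝ (fun z : ℂ × ℂ => conj z.1) z :=
  (Complex.conjCLE.toContinuousLinearMap.analyticAt _).fun_comp analyticAt_fst
theorem LP_at {G : ℂ × ℂ → ℂ} {z : ℂ × ℂ} (h : AnalyticAt ℝ G z) : AnalyticAt ℝ (LP G) z :=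
  ((conj1_at z).pow 2).mul (LL_at h)

noncomputable def ss (l : ℂ) : ℝ := l.re ^ 2 + l.im ^ 2
noncomputable def kap (p : ℝ) (l : ℂ) : ℝ := Real.sqrt (1 + ss l * (1 - p ^ 2))
noncomputable def al (p : ℝ) (l : ℂ) : ℝ := p * ss l / (1 + ss l)
noncomputable def be (p : ℝ) (l : ℂ) : ℝ := kap p l / (1 + ss l)
noncomputable def zz (p : ℝ) (y : ℝ × ℂ) : ℂ :=
  al p y.2 + be p y.2 * Complex.exp (y.1 * Complex.I)
noncomputable def gam (p : ℝ) (y : ℝ × ℂ) : ℂ × ℂ := (zz p y, y.2 * (zz p y - p))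
noncomputable def zth (p : ℝ) (y : ℝ × ℂ) : ℂ :=
  Complex.I * (be p y.2 * Complex.exp (y.1 * Complex.I))
noncomputable def TT (p : ℝ) (y : ℝ × ℂ) : ℂ := kap p y.2 * Complex.exp (y.1 * Complex.I)

noncomputable def JJ (p : ℝ) (G : ℂ × ℂ → ℂ) (l : ℂ) : ℂ :=
  ∫ θ in (0 : ℝ)..(2 * Real.pi), G (gam p (θ, l)) * zth p (θ, l)

theorem ss_nonneg (l : ℂ) : 0 ≤ ss l := by unfold ss; positivity
theorem ss_pos (l : ℂ) : 0 < 1 + ss l := by linarith [ss_nonneg l]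
theorem ss_eq (l : ℂ) : (ss l : ℂ) = l * conj l := by
  rw [Complex.mul_conj, Complex.normSq_apply, ss]; push_cast; ring
theorem in_sqrt {p : ℝ} (hp : p ∈ Icc (0 : ℝ) 1) (l : ℂ) : 0 < 1 + ss l * (1 - p ^ 2) := by
  have : 0 ≤ 1 - p ^ 2 := by nlinarith [hp.1, hp.2]
  have := mul_nonneg (ss_nonneg l) this
  linarith
theorem kap_pos {p : ℝ} (hp : p ∈ Icc (0 : ℝ) 1) (l : ℂ) : 0 < kap p l :=
  Real.sqrt_pos.2 (in_sqrt hp l)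
theorem kap_sq {p : ℝ} (hp : p ∈ Icc (0 : ℝ) 1) (l : ℂ) :
    kap p l ^ 2 = 1 + ss l * (1 - p ^ 2) := Real.sq_sqrt (in_sqrt hp l).le

theorem ss_cd : ContDiff ℝ ω ss := by
  unfold ss
  have h1 : ContDiff ℝ ω Complex.re := Complex.reCLM.contDiff
  have h2 : ContDiff ℝ ω Complex.im := Complex.imCLM.contDiff
  fun_prop
theorem kap_cd {p : ℝ} (hp : p ∈ Icc (0 : ℝ) 1) : ContDiff ℝ ω (kap p) := by
  rw [contDiff_iff_contDiffAt]
  intro l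
  have h1 : ContDiffAt ℝ ω (fun l => 1 + ss l * (1 - p ^ 2)) l := by
    have := ss_cd.contDiffAt (x := l)
    fun_prop
  exact (Real.contDiffAt_sqrt (in_sqrt hp l).ne').comp l h1
theorem al_cd {p : ℝ} : ContDiff ℝ ω (al p) := by
  unfold al
  have := ss_cd
  exact ContDiff.div (by fun_prop) (by fun_prop) fun l => (ss_pos l).ne'
theorem be_cd {p : ℝ} (hp : p ∈ Icc (0 : ℝ) 1) : ContDiff ℝ ω (be p) := by
  unfold be
  have := ss_cd
  exact ContDiff.div (kap_cd hp) (by fun_prop) fun l => (ss_pos l).ne'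
theorem ofReal_cd : ContDiff ℝ ω (fun x : ℝ => (x : ℂ)) := Complex.ofRealCLM.contDiff
theorem ofReal_cd' {E : Type*} [NormedAddCommGroup E] [NormedSpace ℝ E] {f : E → ℝ}
    (hf : ContDiff ℝ ω f) : ContDiff ℝ ω (fun x => (f x : ℂ)) := ofReal_cd.comp hf
theorem ex_cd : ContDiff ℝ ω (fun y : ℝ × ℂ => Complex.exp (y.1 * Complex.I)) := by
  have := ofReal_cd' (E := ℝ × ℂ) contDiff_fst
  fun_prop
theorem zz_cd {p : ℝ} (hp : p ∈ Icc (0 : ℝ) 1) : ContDiff ℝ ω (zz p) := by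
  unfold zz
  have h1 := ofReal_cd' ((al_cd (p := p)).comp (contDiff_snd (E := ℝ) (F := ℂ)))
  have h2 := ofReal_cd' ((be_cd hp).comp (contDiff_snd (E := ℝ) (F := ℂ)))
  have h3 := ex_cd
  exact h1.add (h2.mul h3)
theorem gam_cd {p : ℝ} (hp : p ∈ Icc (0 : ℝ) 1) : ContDiff ℝ ω (gam p) := by
  unfold gam
  have := zz_cd hp
  fun_prop
theorem zth_cd {p : ℝ} (hp : p ∈ Icc (0 : ℝ) 1) : ContDiff ℝ ω (zth p) := by
  unfold zth
  have h2 := ofReal_cd' ((be_cd hp).comp (contDiff_snd (E := ℝ) (F := ℂ)))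
  have h3 := ex_cd
  exact contDiff_const.mul (h2.mul h3)
theorem TT_cd {p : ℝ} (hp : p ∈ Icc (0 : ℝ) 1) : ContDiff ℝ ω (TT p) := by
  unfold TT
  have h2 := ofReal_cd' ((kap_cd hp).comp (contDiff_snd (E := ℝ) (F := ℂ)))
  have h3 := ex_cd
  exact h2.mul h3
theorem TT_ne {p : ℝ} (hp : p ∈ Icc (0 : ℝ) 1) (y) : TT p y ≠ 0 := by
  unfold TT
  exact mul_ne_zero (by exact_mod_cast (kap_pos hp _).ne') (Complex.exp_ne_zero _)

/-- analytic along gam -/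
def AG (p : ℝ) (G : ℂ × ℂ → ℂ) : Prop := ∀ y, AnalyticAt ℝ G (gam p y)

theorem AG.comp {p : ℝ} (hp : p ∈ Icc (0 : ℝ) 1) {G} (hG : AG p G) :
    ContDiff ℝ ω (fun y => G (gam p y)) := by
  rw [← an_iff]
  intro y
  exact (hG y).fun_comp ((contDiff_omega_iff_analyticOnNhd.1 (gam_cd hp)) y trivial)

theorem JJ_an {p : ℝ} (hp : p ∈ Icc (0 : ℝ) 1) {G} (hG : AG p G) : An (JJ p G) := by
  have := (hG.comp hp).mul (zth_cd hp)
  exact fun l => ap ((an_iff _).2 this) 0 (2 * Real.pi) l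

-- algebra
theorem expc (θ : ℝ) : Complex.exp (θ * Complex.I) * conj (Complex.exp (θ * Complex.I)) = 1 := by
  rw [Complex.mul_conj, Complex.normSq_eq_norm_sq, Complex.norm_exp_ofReal_mul_I]; simp

theorem al_rel (p : ℝ) (l : ℂ) : (1 + ss l) * (al p l - p) = -p := by
  have := ss_pos l
  unfold al; field_simp; ring
theorem be_rel (p : ℝ) (l : ℂ) : (1 + ss l) * be p l = kap p l := by
  have := ss_pos l
  unfold be; field_simp
theorem be_rel2 {p : ℝ} (hp : p ∈ Icc (0 : ℝ) 1) (l : ℂ) :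
    ((1 + ss l) * be p l) ^ 2 = 1 + ss l * (1 - p ^ 2) := by
  rw [be_rel, kap_sq hp]

theorem TT_eq (p : ℝ) (y) : TT p y = (1 + ss y.2) * (zz p y - p) + p := by
  have h1 : ((1 + ss y.2 : ℝ) : ℂ) * ((al p y.2 - p : ℝ) : ℂ) = ((-p : ℝ) : ℂ) := by
    rw [← Complex.ofReal_mul, al_rel]
  have h2 : ((1 + ss y.2 : ℝ) : ℂ) * (be p y.2 : ℂ) = (kap p y.2 : ℂ) := by
    rw [← Complex.ofReal_mul, be_rel]
  push_cast at h1 h2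
  unfold TT zz
  linear_combination -h1 - Complex.exp (y.1 * Complex.I) * h2

theorem TT_norm {p : ℝ} (hp : p ∈ Icc (0 : ℝ) 1) (y) :
    TT p y * conj (TT p y) = 1 + ss y.2 * (1 - p ^ 2) := by
  have h2 : (kap p y.2 : ℂ) ^ 2 = 1 + ss y.2 * (1 - p ^ 2) := by exact_mod_cast kap_sq hp y.2
  unfold TT
  rw [map_mul, Complex.conj_ofReal]
  linear_combination h2 + (kap p y.2 : ℂ) ^ 2 * expc y.1

theorem constr {p : ℝ} (hp : p ∈ Icc (0 : ℝ) 1) (y) :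
    (1 + ss y.2) * ((zz p y - p) * (conj (zz p y) - p)) + p * (zz p y - p + (conj (zz p y) - p))
      = 1 - p ^ 2 := by
  have h := TT_norm hp y
  rw [TT_eq] at h
  simp only [map_add, map_mul, map_sub, map_one, Complex.conj_ofReal] at h
  have hne : (1 + ss y.2 : ℂ) ≠ 0 := by exact_mod_cast (ss_pos y.2).ne'
  apply mul_left_cancel₀ hne
  linear_combination h

theorem tbT {p : ℝ} (hp : p ∈ Icc (0 : ℝ) 1) (y) :
    (conj (zz p y) - p) * TT p y = 1 - p * zz p y := by
  rw [TT_eq]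
  linear_combination constr hp y
theorem zbT {p : ℝ} (hp : p ∈ Icc (0 : ℝ) 1) (y) :
    conj (zz p y) * TT p y = 1 + ss y.2 * p * (zz p y - p) := by
  have := tbT hp y
  rw [TT_eq] at *
  linear_combination this

theorem gam_sphere {p : ℝ} (hp : p ∈ Icc (0 : ℝ) 1) (y) :
    ‖(gam p y).1‖ ^ 2 + ‖(gam p y).2‖ ^ 2 = 1 := by
  have h := constr hp y
  have h1 : ((‖(gam p y).1‖ ^ 2 + ‖(gam p y).2‖ ^ 2 : ℝ) : ℂ) = 1 := by
    push_cast
    rw [← Complex.mul_conj', ← Complex.mul_conj']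
    simp only [gam, map_mul, map_sub, Complex.conj_ofReal]
    rw [ss_eq] at h
    linear_combination h
  exact_mod_cast h1
end

section
open Metric Set Filter
open scoped ENNReal NNReal Topology ContDiff ComplexConjugate

noncomputable def Xd (p : ℝ) (G : ℂ × ℂ → ℂ) (y : ℝ × ℂ) : ℂ :=
  (zz p y - p) * d2 G (gam p y) * zth p y
noncomputable def Rd (p : ℝ) (G : ℂ × ℂ → ℂ) (y : ℝ × ℂ) : ℂ :=
  (db1 G (gam p y) + conj y.2 * db2 G (gam p y)) *
    ((zz p y - p) * (conj (zz p y) - p) / TT p y) * zth p y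
noncomputable def Yd (p : ℝ) (G : ℂ × ℂ → ℂ) (y : ℝ × ℂ) : ℂ :=
  (conj (zz p y) - p) / TT p y * LL G (gam p y) * zth p y

theorem conj_cd : ContDiff ℝ ω (fun z : ℂ => conj z) :=
  Complex.conjCLE.toContinuousLinearMap.contDiff

theorem Xd_cd {p : ℝ} (hp : p ∈ Icc (0 : ℝ) 1) {G} (hG : AG p G) : ContDiff ℝ ω (Xd p G) := by
  have h1 := AG.comp hp (G := d2 G) (fun y => d2_at (hG y))
  have h2 := zz_cd hp
  have h3 := zth_cd hp
  unfold Xd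
  fun_prop

theorem Rd_cd {p : ℝ} (hp : p ∈ Icc (0 : ℝ) 1) {G} (hG : AG p G) : ContDiff ℝ ω (Rd p G) := by
  have h1 := AG.comp hp (G := db1 G) (fun y => db1_at (hG y))
  have h1' := AG.comp hp (G := db2 G) (fun y => db2_at (hG y))
  have h2 := zz_cd hp
  have h3 := zth_cd hp
  have h4 := conj_cd.comp h2
  have h5 := conj_cd.comp (contDiff_snd (E := ℝ) (F := ℂ))
  have h6 := ContDiff.inv (TT_cd hp) (TT_ne hp)
  unfold Rd
  simp only [div_eq_mul_inv]
  exact ((h1.add (h5.mul h1')).mul (((h2.sub contDiff_const).mul (h4.sub contDiff_const)).mul h6)).mul h3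

theorem Yd_cd {p : ℝ} (hp : p ∈ Icc (0 : ℝ) 1) {G} (hG : AG p G) : ContDiff ℝ ω (Yd p G) := by
  have h1 := AG.comp hp (G := LL G) (fun y => LL_at (hG y))
  have h2 := zz_cd hp
  have h3 := zth_cd hp
  have h4 := conj_cd.comp h2
  have h6 := ContDiff.inv (TT_cd hp) (TT_ne hp)
  unfold Yd
  simp only [div_eq_mul_inv]
  exact (((h4.sub contDiff_const).mul h6).mul h1).mul h3

theorem slice_int {f : ℝ × ℂ → ℂ} (hf : ContDiff ℝ ω f) (l : ℂ) (a b : ℝ) :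
    IntervalIntegrable (fun θ : ℝ => f (θ, l)) MeasureTheory.volume a b :=
  (hf.continuous.comp (by fun_prop : Continuous fun θ : ℝ => (θ, l))).intervalIntegrable _ _

theorem rels {p : ℝ} (hp : p ∈ Icc (0 : ℝ) 1) (l e : ℂ) : ∃ a' b' : ℝ,
    HasDerivAt (fun τ : ℝ => al p (l + τ * e)) a' 0 ∧
    HasDerivAt (fun τ : ℝ => be p (l + τ * e)) b' 0 ∧
    (1 + ss l : ℂ) * a' = -(e * conj l + conj e * l) * (al p l - p) ∧
    (1 + ss l : ℂ) * 2 * be p l * b' =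
      -(e * conj l + conj e * l) * ((al p l - p) ^ 2 + be p l ^ 2) := by
  have hc : HasDerivAt (fun τ : ℝ => l + τ * e) e 0 := by
    simpa using ((Complex.ofRealCLM.hasDerivAt (x := 0)).mul_const e).const_add l
  have hl : l + ((0 : ℝ) : ℂ) * e = l := by simp
  have ha : ∃ a', HasDerivAt (fun τ : ℝ => al p (l + τ * e)) a' 0 := by
    have h := ((al_cd (p := p)).differentiable (by simp) (l + ((0:ℝ):ℂ)*e)).hasFDerivAt
    have h2 := h.comp_hasDerivAt (0:ℝ) hc
    exact ⟨_, h2⟩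
  have hb : ∃ a', HasDerivAt (fun τ : ℝ => be p (l + τ * e)) a' 0 := by
    have h := ((be_cd hp).differentiable (by simp) (l + ((0:ℝ):ℂ)*e)).hasFDerivAt
    have h2 := h.comp_hasDerivAt (0:ℝ) hc
    exact ⟨_, h2⟩
  obtain ⟨a', ha⟩ := ha
  obtain ⟨b', hb⟩ := hb
  have hs : HasDerivAt (fun τ : ℝ => ss (l + τ * e)) (2 * (l.re * e.re + l.im * e.im)) 0 := by
    have h1 : HasDerivAt (fun τ : ℝ => l.re + τ * e.re) e.re 0 := by
      simpa using ((hasDerivAt_id (0 : ℝ)).mul_const e.re).const_add l.re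
    have h2 : HasDerivAt (fun τ : ℝ => l.im + τ * e.im) e.im 0 := by
      simpa using ((hasDerivAt_id (0 : ℝ)).mul_const e.im).const_add l.im
    have h3 := (h1.pow 2).add (h2.pow 2)
    have h4 : (fun τ : ℝ => ss (l + τ * e)) =
        (fun τ : ℝ => l.re + τ * e.re) ^ 2 + (fun τ : ℝ => l.im + τ * e.im) ^ 2 := by
      funext τ; simp [ss]
    rw [h4]
    exact h3.congr_deriv (by simp; ring)
  set s' := 2 * (l.re * e.re + l.im * e.im) with hs'
  have es : (s' : ℂ) = e * conj l + conj e * l := by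
    apply Complex.ext <;> simp [hs'] <;> ring
  have r1 : s' * (al p l - p) + (1 + ss l) * a' = 0 := by
    have h1 := (hs.const_add 1).mul (ha.sub_const p)
    have h2 : ((fun τ : ℝ => 1 + ss (l + τ * e)) * fun τ : ℝ => al p (l + τ * e) - p) = fun _ => -p := by
      funext τ; exact al_rel p _
    rw [h2] at h1
    have h3 := h1.unique (hasDerivAt_const _ _)
    rw [hl] at h3; exact h3
  have r2 : 2 * ((1 + ss l) * be p l) * (s' * be p l + (1 + ss l) * b') = s' * (1 - p ^ 2) := by
    have h1 := ((hs.const_add 1).mul hb).pow 2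
    have h2 : ((fun τ : ℝ => 1 + ss (l + τ * e)) * fun τ : ℝ => be p (l + τ * e)) ^ 2 =
        fun τ : ℝ => 1 + ss (l + τ * e) * (1 - p ^ 2) := by
      funext τ; exact be_rel2 hp _
    rw [h2] at h1
    have h3 := h1.unique ((hs.mul_const (1 - p ^ 2)).const_add 1)
    simp only [Pi.mul_apply, hl] at h3
    simpa using h3
  refine ⟨a', b', ha, hb, ?_, ?_⟩
  · rw [← es]
    exact_mod_cast (by linarith : (1 + ss l) * a' = -s' * (al p l - p))
  · rw [← es]
    have : (1 + ss l) * 2 * be p l * b' = -s' * ((al p l - p) ^ 2 + be p l ^ 2) := by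
      have hne := (ss_pos l).ne'
      apply mul_left_cancel₀ hne
      have q1 := al_rel p l
      have q2 := be_rel2 hp l
      apply mul_left_cancel₀ hne
      linear_combination (1 + ss l) * r2 - s' * q2 + s' * ((1 + ss l) * (al p l - p) - p) * q1
    exact_mod_cast this

theorem JD {p : ℝ} (hp : p ∈ Icc (0 : ℝ) 1) {G} (hG : AG p G) (l e : ℂ) :
    fderiv ℝ (JJ p G) l e =
      e * ((∫ θ in (0 : ℝ)..(2 * Real.pi), Xd p G (θ, l)) -
        conj l * ∫ θ in (0 : ℝ)..(2 * Real.pi), Rd p G (θ, l)) +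
      conj e * (-∫ θ in (0 : ℝ)..(2 * Real.pi), Yd p G (θ, l)) := by
  obtain ⟨a', b', ha, hb, r1, r2⟩ := rels hp l e
  have hl : l + ((0 : ℝ) : ℂ) * e = l := by simp
  have hΦ := (hG.comp hp).mul (zth_cd hp)
  have h0 := di_apply ((an_iff _).2 hΦ) 0 (2 * Real.pi) l e
  refine h0.trans ?_
  have ha' := ha.ofReal_comp
  have hb' := hb.ofReal_comp
  -- the derivative in θ
  set w : ℝ → ℂ := fun θ => Complex.exp (θ * Complex.I) with hw
  have hwd : ∀ θ, HasDerivAt w (Complex.I * w θ) θ := by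
    intro θ
    have := ((Complex.ofRealCLM.hasDerivAt (x := θ)).mul_const Complex.I).cexp
    simpa [hw, mul_comm] using this
  have hc : HasDerivAt (fun τ : ℝ => l + τ * e) e 0 := by
    simpa using ((Complex.ofRealCLM.hasDerivAt (x := 0)).mul_const e).const_add l
  have A : ∀ θ : ℝ, fderiv ℝ (fun x => G (gam p (θ, x)) * zth p (θ, x)) l e =
      fderiv ℝ G (gam p (θ, l)) (a' + b' * w θ, e * (zz p (θ, l) - p) + l * (a' + b' * w θ)) *
        zth p (θ, l) + G (gam p (θ, l)) * (Complex.I * (b' * w θ)) := by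
    intro θ
    have hz : HasDerivAt (fun τ : ℝ => zz p (θ, l + τ * e)) (a' + b' * w θ) 0 :=
      ha'.add (hb'.mul_const (w θ))
    have hg2 : HasDerivAt (fun τ : ℝ => (l + τ * e) * (zz p (θ, l + τ * e) - p))
        (e * (zz p (θ, l) - p) + l * (a' + b' * w θ)) 0 := by
      have := hc.mul (hz.sub_const (p : ℂ))
      simp only [hl] at this
      exact this
    have hg := hz.prodMk hg2
    have hzt : HasDerivAt (fun τ : ℝ => zth p (θ, l + τ * e)) (Complex.I * (b' * w θ)) 0 :=
      (hb'.mul_const (w θ)).const_mul Complex.I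
    have hGd : HasFDerivAt G (fderiv ℝ G (gam p (θ, l))) (gam p (θ, l + ((0 : ℝ) : ℂ) * e)) := by
      rw [hl]; exact (hG (θ, l)).differentiableAt.hasFDerivAt
    have h1 := (hGd.comp_hasDerivAt (0 : ℝ) hg).mul hzt
    have h2 : HasFDerivAt (fun x => G (gam p (θ, x)) * zth p (θ, x))
        (fderiv ℝ (fun x => G (gam p (θ, x)) * zth p (θ, x)) l) (l + ((0 : ℝ) : ℂ) * e) := by
      rw [hl]
      have : ContDiff ℝ ω (fun x => G (gam p (θ, x)) * zth p (θ, x)) :=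
        hΦ.comp (by fun_prop : ContDiff ℝ ω fun x : ℂ => (θ, x))
      exact (this.differentiable (by simp) l).hasFDerivAt
    have h3 := h2.comp_hasDerivAt (0 : ℝ) hc
    have h4 := h3.unique h1
    simp only [Function.comp_apply, hl] at h4
    exact h4
  have B : ∀ θ : ℝ, HasDerivAt (fun θ => G (gam p (θ, l)) * (a' + b' * w θ))
      (fderiv ℝ G (gam p (θ, l)) (zth p (θ, l), l * zth p (θ, l)) * (a' + b' * w θ) +
        G (gam p (θ, l)) * (Complex.I * (b' * w θ))) θ := by
    intro θ
    have hz : HasDerivAt (fun θ : ℝ => zz p (θ, l)) (zth p (θ, l)) θ := by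
      have := ((hwd θ).const_mul (be p l : ℂ)).const_add (al p l : ℂ)
      exact this.congr_deriv (by simp only [zth, hw]; ring)
    have hg := hz.prodMk ((hz.sub_const (p : ℂ)).const_mul l)
    have h1 : HasDerivAt (fun θ => (a' + b' * w θ : ℂ)) (Complex.I * (b' * w θ)) θ := by
      have := ((hwd θ).const_mul (b' : ℂ)).const_add (a' : ℂ)
      exact this.congr_deriv (by ring)
    have hGd : HasFDerivAt G (fderiv ℝ G (gam p (θ, l))) (gam p (θ, l)) :=
      (hG (θ, l)).differentiableAt.hasFDerivAt
    exact (HasFDerivAt.comp_hasDerivAt (f := fun θ : ℝ => gam p (θ, l)) θ hGd hg).mul h1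
  set Bf : ℝ → ℂ := fun θ => (fderiv ℝ G (gam p (θ, l)) (zth p (θ, l), l * zth p (θ, l)) *
      (a' + b' * w θ) + G (gam p (θ, l)) * (Complex.I * (b' * w θ))) with hBf
  have hBc : Continuous Bf := by
    have c1 : Continuous fun θ : ℝ => fderiv ℝ G (gam p (θ, l)) := by
      have hgc := (gam_cd hp).continuous
      refine continuous_iff_continuousAt.2 fun θ => ?_
      exact ContinuousAt.comp (f := fun θ : ℝ => gam p (θ, l)) (hG (θ, l)).fderiv.continuousAt
        (hgc.comp (by fun_prop : Continuous fun θ : ℝ => (θ, l))).continuousAt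
    have c2 : Continuous fun θ : ℝ => zth p (θ, l) :=
      (zth_cd hp).continuous.comp (by fun_prop : Continuous fun θ : ℝ => (θ, l))
    have c3 : Continuous w := by fun_prop
    have c4 : Continuous fun θ : ℝ => G (gam p (θ, l)) :=
      (hG.comp hp).continuous.comp (by fun_prop : Continuous fun θ : ℝ => (θ, l))
    have c5 : Continuous fun θ : ℝ => fderiv ℝ G (gam p (θ, l)) (zth p (θ, l), l * zth p (θ, l)) :=
      c1.clm_apply (c2.prodMk (continuous_const.mul c2))
    exact (c5.mul (continuous_const.add (continuous_const.mul c3))).add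
      (c4.mul (continuous_const.mul (continuous_const.mul c3)))
  have hB0 : ∫ θ in (0 : ℝ)..(2 * Real.pi), Bf θ = 0 := by
    rw [intervalIntegral.integral_eq_sub_of_hasDerivAt (fun θ _ => B θ) (hBc.intervalIntegrable _ _)]
    have : w (2 * Real.pi) = w 0 := by simp [hw]
    have h2 : gam p (2 * Real.pi, l) = gam p (0, l) := by
      have : zz p (2 * Real.pi, l) = zz p (0, l) := by
        simp [zz]
      simp [gam, this]
    rw [this, h2, sub_self]
  have C : ∀ θ : ℝ, fderiv ℝ (fun x => G (gam p (θ, x)) * zth p (θ, x)) l e =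
      e * Xd p G (θ, l) - e * conj l * Rd p G (θ, l) - conj e * Yd p G (θ, l) + Bf θ := by
    intro θ
    rw [A, hBf]
    simp only [fderiv_d, Xd, Rd, Yd]
    have hT := TT_ne hp (θ, l)
    have hTe := TT_eq p (θ, l)
    have hTe2 : TT p (θ, l) = (1 + ss l) * be p l * w θ := by
      have h2 : ((1 + ss l : ℝ) : ℂ) * (be p l : ℂ) = (kap p l : ℂ) := by
        rw [← Complex.ofReal_mul, be_rel]
      rw [TT]; simp only; rw [← h2]; push_cast; rfl
    have hww : w θ * conj (w θ) = 1 := expc θ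
    have hcw : conj (zz p (θ, l)) = al p l + be p l * conj (w θ) := by
      simp [zz, hw]
    have hzw : zz p (θ, l) = al p l + be p l * w θ := rfl
    have hzt : zth p (θ, l) = Complex.I * (be p l * w θ) := rfl
    have hczt : conj (zth p (θ, l)) = -Complex.I * (be p l * conj (w θ)) := by
      rw [hzt]; simp
    -- main identity
    have hW : TT p (θ, l) * ((a' + b' * conj (w θ)) * zth p (θ, l) -
        conj (zth p (θ, l)) * (a' + b' * w θ)) =
        -(zth p (θ, l) * (e * conj l + conj e * l) * ((zz p (θ, l) - p) * (conj (zz p (θ, l)) - p))) := by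
      rw [hczt, hzt, hcw, hzw, hTe2]
      linear_combination (be p l * w θ * Complex.I * be p l * (w θ + conj (w θ))) * r1 +
        (be p l * w θ * Complex.I) * r2 + (Complex.I * be p l * w θ *
          ((1 + ss l) * be p l * 2 * b' + (e * conj l + conj e * l) * be p l ^ 2)) * hww
    set t := zz p (θ, l) - p with ht
    set tb := conj (zz p (θ, l)) - p with htb
    have hz1 : (gam p (θ, l)).1 = t + p := by simp [gam, ht]
    have hz2 : (gam p (θ, l)).2 = l * t := by simp [gam, ht]
    have hctb : conj t = tb := by simp [ht, htb]
    have hW' : ((a' + b' * conj (w θ)) * zth p (θ, l) -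
        conj (zth p (θ, l)) * (a' + b' * w θ)) =
        -(zth p (θ, l) * (e * conj l + conj e * l) * (t * tb / TT p (θ, l))) := by
      field_simp
      linear_combination hW
    have hcW : (t + p) / TT p (θ, l) = 1 - l * conj l * t / TT p (θ, l) := by
      rw [← ss_eq]
      field_simp
      rw [hTe]; simp only; ring
    have hz1' : (t + (p:ℂ)) * (tb / TT p (θ, l)) = tb - l * conj l * (t * tb / TT p (θ, l)) := by
      linear_combination tb * hcW
    rw [LL, hz1, hz2]
    simp only [map_add, map_mul, Complex.conj_ofReal, hctb]
    linear_combination (db1 G (gam p (θ, l)) + conj l * db2 G (gam p (θ, l))) * hW' -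
      (conj e * db2 G (gam p (θ, l)) * zth p (θ, l)) * hz1'
  calc _ = ∫ θ in (0 : ℝ)..(2 * Real.pi), (e * Xd p G (θ, l) - e * conj l * Rd p G (θ, l) -
        conj e * Yd p G (θ, l) + Bf θ) := intervalIntegral.integral_congr fun θ _ => C θ
    _ = _ := by
      have i1 := slice_int (Xd_cd hp hG) l 0 (2 * Real.pi)
      have i2 := slice_int (Rd_cd hp hG) l 0 (2 * Real.pi)
      have i3 := slice_int (Yd_cd hp hG) l 0 (2 * Real.pi)
      rw [intervalIntegral.integral_add
        (((i1.const_mul e).sub (i2.const_mul _)).sub (i3.const_mul _)) (hBc.intervalIntegrable _ _),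
        intervalIntegral.integral_sub ((i1.const_mul e).sub (i2.const_mul _)) (i3.const_mul _),
        intervalIntegral.integral_sub (i1.const_mul e) (i2.const_mul _), hB0,
        intervalIntegral.integral_const_mul, intervalIntegral.integral_const_mul,
        intervalIntegral.integral_const_mul]
      ring
end

section
open Metric Set Filter
open scoped ENNReal NNReal Topology ContDiff ComplexConjugate

theorem dzb_JJ {p : ℝ} (hp : p ∈ Icc (0 : ℝ) 1) {G} (hG : AG p G) (l : ℂ) :
    dzb (JJ p G) l = -∫ θ in (0 : ℝ)..(2 * Real.pi), Yd p G (θ, l) := by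
  rw [dzb, JD hp hG, JD hp hG]
  simp only [map_one, Complex.conj_I]
  linear_combination (1 / 2) * ((∫ θ in (0 : ℝ)..(2 * Real.pi), Xd p G (θ, l)) -
        conj l * (∫ θ in (0 : ℝ)..(2 * Real.pi), Rd p G (θ, l)) +
        ∫ θ in (0 : ℝ)..(2 * Real.pi), Yd p G (θ, l)) * Complex.I_sq
theorem dz_JJ {p : ℝ} (hp : p ∈ Icc (0 : ℝ) 1) {G} (hG : AG p G) (l : ℂ) :
    dz (JJ p G) l = (∫ θ in (0 : ℝ)..(2 * Real.pi), Xd p G (θ, l)) -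
        conj l * ∫ θ in (0 : ℝ)..(2 * Real.pi), Rd p G (θ, l) := by
  rw [dz, JD hp hG, JD hp hG]
  simp only [map_one, Complex.conj_I]
  linear_combination -(1 / 2) * ((∫ θ in (0 : ℝ)..(2 * Real.pi), Xd p G (θ, l)) -
        conj l * (∫ θ in (0 : ℝ)..(2 * Real.pi), Rd p G (θ, l)) +
        ∫ θ in (0 : ℝ)..(2 * Real.pi), Yd p G (θ, l)) * Complex.I_sq

/-- multiplier -/
def pm (ψ : ℂ → ℂ) (G : ℂ × ℂ → ℂ) (z : ℂ × ℂ) : ℂ := ψ z.1 * G z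

theorem pm_fd {ψ : ℂ → ℂ} {G : ℂ × ℂ → ℂ} {z : ℂ × ℂ} (hψ : AnalyticAt ℂ ψ z.1)
    (hG : AnalyticAt ℝ G z) (u v : ℂ) :
    fderiv ℝ (pm ψ G) z (u, v) = ψ z.1 * fderiv ℝ G z (u, v) + u * deriv ψ z.1 * G z := by
  have h1 : HasFDerivAt ψ ((ContinuousLinearMap.toSpanSingleton ℂ (deriv ψ z.1)).restrictScalars ℝ) z.1 :=
    hψ.differentiableAt.hasDerivAt.hasFDerivAt.restrictScalars ℝ
  have h2 := (h1.comp z hasFDerivAt_fst).mul hG.differentiableAt.hasFDerivAt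
  have h3 := h2.fderiv
  refine (congrArg (fun A => A (u, v)) h3).trans ?_
  simp; ring

theorem pm_at {ψ : ℂ → ℂ} {G : ℂ × ℂ → ℂ} {z : ℂ × ℂ} (hψ : AnalyticAt ℂ ψ z.1)
    (hG : AnalyticAt ℝ G z) : AnalyticAt ℝ (pm ψ G) z :=
  ((hψ.restrictScalars (𝕜 := ℝ)).fun_comp (analyticAt_fst)).mul hG

theorem pm_d2 {ψ : ℂ → ℂ} {G : ℂ × ℂ → ℂ} {z : ℂ × ℂ} (hψ : AnalyticAt ℂ ψ z.1)
    (hG : AnalyticAt ℝ G z) : d2 (pm ψ G) z = ψ z.1 * d2 G z := by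
  rw [d2, pm_fd hψ hG, pm_fd hψ hG, d2]; ring
theorem pm_LL {ψ : ℂ → ℂ} {G : ℂ × ℂ → ℂ} {z : ℂ × ℂ} (hψ : AnalyticAt ℂ ψ z.1)
    (hG : AnalyticAt ℝ G z) : LL (pm ψ G) z = ψ z.1 * LL G z := by
  rw [LL, db1, db2, pm_fd hψ hG, pm_fd hψ hG, pm_fd hψ hG, pm_fd hψ hG, LL, db1, db2]
  linear_combination (z.2 * deriv ψ z.1 * G z / 2) * Complex.I_sq

def HH (p : ℝ) (ψ : ℂ → ℂ) : Prop := ∀ y, AnalyticAt ℂ ψ (zz p y)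

theorem AG.pm {p : ℝ} {ψ : ℂ → ℂ} {G : ℂ × ℂ → ℂ} (hψ : HH p ψ) (hG : AG p G) :
    AG p (pm ψ G) := fun y => pm_at (hψ y) (hG y)
theorem AG.LP {p : ℝ} {G : ℂ × ℂ → ℂ} (hG : AG p G) : AG p (LP G) := fun y => LP_at (hG y)
theorem AG.LPn {p : ℝ} {G : ℂ × ℂ → ℂ} (hG : AG p G) (n : ℕ) : AG p (_root_.LP^[n] G) := by
  induction n with
  | zero => exact hG
  | succ n ih => rw [Function.iterate_succ_apply']; exact ih.LP
theorem AG.d2n {p : ℝ} {G : ℂ × ℂ → ℂ} (hG : AG p G) (n : ℕ) : AG p (_root_.d2^[n] G) := by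
  induction n with
  | zero => exact hG
  | succ n ih => rw [Function.iterate_succ_apply']; exact fun y => d2_at (ih y)

theorem zero_mem_I : (0 : ℝ) ∈ Icc (0 : ℝ) 1 := by simp

/-- p = 0 -/
theorem dzb0 {ψ : ℂ → ℂ} {G : ℂ × ℂ → ℂ} (hψ : HH 0 ψ) (hG : AG 0 G) :
    dzb (JJ 0 (pm ψ G)) = JJ 0 (pm (fun z => - ψ z) (LP G)) := by
  funext l
  rw [dzb_JJ zero_mem_I (hG.pm hψ), JJ, ← intervalIntegral.integral_neg]
  apply intervalIntegral.integral_congr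
  intro θ _
  have h1 := tbT zero_mem_I (θ, l)
  have hT := TT_ne zero_mem_I (θ, l)
  simp only [Yd]
  rw [pm_LL (hψ (θ, l)) (hG (θ, l))]
  have h2 : (conj (zz 0 (θ, l)) - (0 : ℝ)) / TT 0 (θ, l) = conj (zz 0 (θ, l)) ^ 2 := by
    rw [div_eq_iff hT]
    simp at h1 ⊢
    linear_combination -(conj (zz 0 (θ, l))) * h1
  rw [h2, pm, LP]
  simp only [gam]
  ring

theorem dzb0n {ψ : ℂ → ℂ} {G : ℂ × ℂ → ℂ} (hψ : HH 0 ψ) (hG : AG 0 G) (n : ℕ) :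
    dzb^[n] (JJ 0 (pm ψ G)) = JJ 0 (pm (fun z => (-1) ^ n * ψ z) (LP^[n] G)) := by
  induction n generalizing ψ G with
  | zero => simp
  | succ n ih =>
    rw [Function.iterate_succ_apply, dzb0 hψ hG, ih (ψ := fun z => -ψ z) (fun y => (hψ y).neg) hG.LP,
      Function.iterate_succ_apply]
    congr 2; funext z; ring

theorem dz_sub_mul {A R : ℂ → ℂ} (hA : An A) (hR : An R) (l : ℂ) :
    dz (fun l => A l - conj l * R l) l = dz A l - conj l * dz R l := by
  have h1 : HasFDerivAt (fun l : ℂ => conj l) (Complex.conjCLE.toContinuousLinearMap : ℂ →L[ℝ] ℂ) l :=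
    Complex.conjCLE.toContinuousLinearMap.hasFDerivAt
  have h2 := ((hA l).differentiableAt.hasFDerivAt.sub (h1.mul (hR l).differentiableAt.hasFDerivAt)).fderiv
  have h3 : ∀ e, fderiv ℝ (fun l => A l - conj l * R l) l e =
    fderiv ℝ A l e - (conj l * fderiv ℝ R l e + R l * conj e) := by
    intro e
    refine (congrArg (fun A => A e) h2).trans ?_
    simp
  rw [dz, h3, h3, dz, dz]
  simp only [map_one, Complex.conj_I]
  linear_combination (-R l / 2) * Complex.I_sq

theorem dzn {p : ℝ} (hp : p ∈ Icc (0 : ℝ) 1) {ψ : ℂ → ℂ} {G : ℂ × ℂ → ℂ} (hψ : HH p ψ)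
    (hG : AG p G) (n : ℕ) : ∃ R, An R ∧ ∀ l, dz^[n] (JJ p (pm ψ G)) l =
      JJ p (pm (fun z => ψ z * (z - p) ^ n) (d2^[n] G)) l - conj l * R l := by
  induction n with
  | zero => exact ⟨fun _ => 0, fun x => analyticAt_const, fun l => by simp⟩
  | succ n ih =>
    obtain ⟨R, hR, h⟩ := ih
    have hψ' : HH p (fun z => ψ z * (z - p) ^ n) := fun y =>
      (hψ y).mul ((analyticAt_id.sub analyticAt_const).pow n)
    have hG' := (hG.d2n n).pm hψ'
    refine ⟨fun l => (∫ θ in (0 : ℝ)..(2 * Real.pi),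
      Rd p (pm (fun z => ψ z * (z - p) ^ n) (d2^[n] G)) (θ, l)) + dz R l, ?_, ?_⟩
    · intro l
      exact (ap ((an_iff _).2 (Rd_cd hp hG')) 0 (2 * Real.pi) l).add (hR.dz l)
    · intro l
      rw [Function.iterate_succ_apply', funext h, dz_sub_mul (JJ_an hp hG') hR, dz_JJ hp hG']
      have : JJ p (pm (fun z => ψ z * (z - p) ^ (n + 1)) (d2^[n + 1] G)) l =
          ∫ θ in (0 : ℝ)..(2 * Real.pi), Xd p (pm (fun z => ψ z * (z - p) ^ n) (d2^[n] G)) (θ, l) := by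
        rw [JJ]
        apply intervalIntegral.integral_congr
        intro θ _
        simp only [Xd]
        rw [pm_d2 (hψ' (θ, l)) (hG.d2n n (θ, l)), pm, Function.iterate_succ_apply']
        simp only [gam]
        ring
      rw [this]; ring

theorem dzn0 {p : ℝ} (hp : p ∈ Icc (0 : ℝ) 1) {ψ : ℂ → ℂ} {G : ℂ × ℂ → ℂ} (hψ : HH p ψ)
    (hG : AG p G) (n : ℕ) : dz^[n] (JJ p (pm ψ G)) 0 =
      JJ p (pm (fun z => ψ z * (z - p) ^ n) (d2^[n] G)) 0 := by
  obtain ⟨R, _, h⟩ := dzn hp hψ hG n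
  rw [h]; simp

theorem JJ_zero (p : ℝ) (ψ : ℂ → ℂ) (G : ℂ × ℂ → ℂ) :
    JJ p (pm ψ G) 0 = ∫ θ in (0 : ℝ)..(2 * Real.pi), ψ (Complex.exp (θ * Complex.I)) *
      G (Complex.exp (θ * Complex.I), 0) * (Complex.I * Complex.exp (θ * Complex.I)) := by
  have h1 : ss 0 = 0 := by simp [ss]
  simp [JJ, pm, gam, zz, zth, al, be, kap, h1]

theorem V_step {p : ℝ} (hp : p ∈ Icc (0 : ℝ) 1) {P : Polynomial ℂ} {G : ℂ × ℂ → ℂ} (hG : AG p G)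
    (h : ∀ ψ : Polynomial ℂ, ∀ l, JJ p (pm (fun z => (ψ * P).eval z) G) l = 0) :
    ∀ ψ : Polynomial ℂ, ∀ l,
      JJ p (pm (fun z => (ψ * (P * (1 - Polynomial.C (p : ℂ) * Polynomial.X))).eval z) (LP G)) l = 0 := by
  intro ψ l
  set ψ' := (1 + Polynomial.C (ss l * p : ℂ) * (Polynomial.X - Polynomial.C (p : ℂ))) ^ 2 * ψ with hψ'
  have hH : HH p (fun z => (ψ' * P).eval z) := fun y =>
    (Polynomial.differentiable _).analyticAt _
  have h0 : JJ p (pm (fun z => (ψ' * P).eval z) G) = fun _ => 0 := funext (h ψ')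
  have h1 := dzb_JJ hp (hG.pm hH) l
  rw [h0] at h1
  have h2 : dzb (fun _ => 0) l = 0 := by simp [dzb]
  rw [h2, eq_comm, neg_eq_zero] at h1
  rw [← h1, JJ]
  apply intervalIntegral.integral_congr
  intro θ _
  simp only [Yd]
  rw [pm_LL (hH (θ, l)) (hG (θ, l)), pm, LP]
  have a1 := tbT hp (θ, l)
  have a2 := zbT hp (θ, l)
  have hT := TT_ne hp (θ, l)
  simp only [gam, hψ', Polynomial.eval_mul, Polynomial.eval_pow, Polynomial.eval_add,
    Polynomial.eval_sub, Polynomial.eval_one, Polynomial.eval_C, Polynomial.eval_X]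
  simp only at a1 a2
  have a3 : (conj (zz p (θ, l)) - p) / TT p (θ, l) * (1 + ss l * p * (zz p (θ, l) - p)) ^ 2 =
      (1 - p * zz p (θ, l)) * conj (zz p (θ, l)) ^ 2 := by
    rw [← a2, ← a1]; field_simp
  linear_combination (-Polynomial.eval (zz p (θ, l)) ψ * Polynomial.eval (zz p (θ, l)) P *
    LL G (zz p (θ, l), l * (zz p (θ, l) - p)) * zth p (θ, l)) * a3

theorem V_n {p : ℝ} (hp : p ∈ Icc (0 : ℝ) 1) {G : ℂ × ℂ → ℂ} (hG : AG p G)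
    (h : ∀ ψ : Polynomial ℂ, ∀ l, JJ p (pm (fun z => ψ.eval z) G) l = 0) (n : ℕ) :
    ∀ ψ : Polynomial ℂ, ∀ l,
      JJ p (pm (fun z => (ψ * (1 - Polynomial.C (p : ℂ) * Polynomial.X) ^ n).eval z) (LP^[n] G)) l = 0 := by
  induction n with
  | zero => simpa using h
  | succ n ih =>
    have := V_step hp (hG.LPn n) ih
    simpa only [pow_succ, Function.iterate_succ_apply'] using this

/-- jets of g along the circle -/
noncomputable def cc (g : ℂ × ℂ → ℂ) (l n : ℕ) (θ : ℝ) : ℂ :=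
  (d2^[l] (LP^[n] g)) (Complex.exp (θ * Complex.I), 0)

theorem V_jet {p : ℝ} (hp : p ∈ Icc (0 : ℝ) 1) {G : ℂ × ℂ → ℂ} (hG : AG p G)
    (h : ∀ ψ : Polynomial ℂ, ∀ l, JJ p (pm (fun z => ψ.eval z) G) l = 0) (l n : ℕ)
    (ψ : Polynomial ℂ) :
    ∫ θ in (0 : ℝ)..(2 * Real.pi), (ψ * (1 - Polynomial.C (p : ℂ) * Polynomial.X) ^ n *
      (Polynomial.X - Polynomial.C (p : ℂ)) ^ l * Polynomial.X).eval
      (Complex.exp (θ * Complex.I)) * cc G l n θ = 0 := by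
  have hH : HH p (fun z => (ψ * (1 - Polynomial.C (p : ℂ) * Polynomial.X) ^ n).eval z) := fun y =>
    (Polynomial.differentiable _).analyticAt _
  have h1 := dzn0 hp hH (hG.LPn n) l
  have h2 : ∀ l, dz^[l] (fun _ => (0 : ℂ)) = fun _ => 0 := by
    intro l
    induction l with
    | zero => rfl
    | succ l ih => rw [Function.iterate_succ_apply', ih]; funext x; simp [dz]
  rw [funext (V_n hp hG h n ψ), h2, JJ_zero] at h1
  have h3 : (0 : ℂ) = Complex.I * ∫ θ in (0 : ℝ)..(2 * Real.pi),
      (ψ * (1 - Polynomial.C (p : ℂ) * Polynomial.X) ^ n *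
      (Polynomial.X - Polynomial.C (p : ℂ)) ^ l * Polynomial.X).eval
      (Complex.exp (θ * Complex.I)) * cc G l n θ := by
    rw [← intervalIntegral.integral_const_mul]
    refine Eq.trans h1 ?_
    apply intervalIntegral.integral_congr
    intro θ _
    simp [cc]; ring
  simpa using h3.symm

theorem zz0_ne (y) : zz 0 y ≠ 0 := by
  intro h
  have := tbT zero_mem_I y
  rw [h] at this
  simp at this

theorem q_jet {G : ℂ × ℂ → ℂ} (hG : AG 0 G) (d : ℤ) (l n : ℕ) :
    dz^[l] (dzb^[n] (JJ 0 (pm (fun z => z ^ (-d - 1)) G))) 0 = (-1) ^ n * Complex.I *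
      ∫ θ in (0 : ℝ)..(2 * Real.pi), Complex.exp (((l - d : ℤ) : ℂ) * θ * Complex.I) * cc G l n θ := by
  have hH : HH 0 (fun z => z ^ (-d - 1)) := fun y => analyticAt_id.zpow (zz0_ne y)
  have hH' : HH 0 (fun z => (-1) ^ n * z ^ (-d - 1)) := fun y => analyticAt_const.mul (hH y)
  rw [dzb0n hH hG, dzn0 zero_mem_I hH' (hG.LPn n), JJ_zero, ← intervalIntegral.integral_const_mul]
  apply intervalIntegral.integral_congr
  intro θ _
  simp only [cc]
  have : Complex.exp (((l - d : ℤ) : ℂ) * θ * Complex.I) = Complex.exp (θ * Complex.I) ^ (-d - 1) *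
      Complex.exp (θ * Complex.I) ^ l * Complex.exp (θ * Complex.I) := by
    rw [mul_assoc, Complex.exp_int_mul]
    have h0 := Complex.exp_ne_zero (θ * Complex.I)
    rw [← zpow_natCast, ← zpow_add₀ h0, ← zpow_add_one₀ h0]
    congr 1; ring
  rw [this]
  simp; ring
end

section
open Metric Set Filter
open scoped ENNReal NNReal Topology ContDiff ComplexConjugate

theorem line_mem {p : ℝ} (hp : p ∈ Icc (0 : ℝ) 1) (l w : ℂ) :
    (1 + ss l) * (‖(p : ℂ) + ((al p l : ℂ) - p + w)‖ ^ 2 + ‖l * ((al p l : ℂ) - p + w)‖ ^ 2 - 1) =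
      (1 + ss l) ^ 2 * (‖w‖ ^ 2 - be p l ^ 2) := by
  have h1 := al_rel p l
  have h2 := be_rel2 hp l
  have h3 : ‖l‖ ^ 2 = ss l := by rw [← Complex.normSq_eq_norm_sq, Complex.normSq_apply, ss]; ring
  rw [norm_mul, mul_pow, h3]
  simp only [← Complex.normSq_eq_norm_sq, Complex.normSq_apply]
  simp
  linear_combination (2 * w.re * (1 + ss l) + (1 + ss l) * (al p l) - p * ss l) * h1 + h2

theorem line_V {p : ℝ} (hp : p ∈ Icc (0 : ℝ) 1) {g : ℂ × ℂ → ℂ}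
    (hline : ∀ l : ℂ, ∃ F : ℂ → ℂ, ContinuousOn F {t : ℂ | ‖(p : ℂ) + t‖ ^ 2 + ‖l * t‖ ^ 2 ≤ 1} ∧
      DifferentiableOn ℂ F {t : ℂ | ‖(p : ℂ) + t‖ ^ 2 + ‖l * t‖ ^ 2 < 1} ∧
      ∀ t : ℂ, ‖(p : ℂ) + t‖ ^ 2 + ‖l * t‖ ^ 2 = 1 → F t = g (p + t, l * t))
    (ψ : Polynomial ℂ) (l : ℂ) : JJ p (pm (fun z => ψ.eval z) g) l = 0 := by
  obtain ⟨F, hc, hd, hb⟩ := hline l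
  have hs := ss_pos l
  have hbe : 0 < be p l := div_pos (kap_pos hp l) hs
  have key : ∀ w : ℂ, (‖(p : ℂ) + ((al p l : ℂ) - p + w)‖ ^ 2 + ‖l * ((al p l : ℂ) - p + w)‖ ^ 2) =
      1 + (1 + ss l) * (‖w‖ ^ 2 - be p l ^ 2) := by
    intro w
    have := line_mem hp l w
    apply mul_left_cancel₀ hs.ne'
    linear_combination this
  have key2 : ∀ t : ℂ, ‖(p : ℂ) + t‖ ^ 2 + ‖l * t‖ ^ 2 =
      1 + (1 + ss l) * (‖t - (al p l - p)‖ ^ 2 - be p l ^ 2) := by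
    intro t
    have := key (t - (al p l - p))
    simpa using this
  have s1 : closedBall ((al p l : ℂ) - p) (be p l) ⊆ {t : ℂ | ‖(p : ℂ) + t‖ ^ 2 + ‖l * t‖ ^ 2 ≤ 1} := by
    intro t ht
    rw [mem_closedBall, dist_eq_norm] at ht
    rw [Set.mem_ofPred_eq]
    rw [key2]
    have : ‖t - (al p l - p)‖ ^ 2 ≤ be p l ^ 2 := by gcongr
    nlinarith
  have s2 : ball ((al p l : ℂ) - p) (be p l) ⊆ {t : ℂ | ‖(p : ℂ) + t‖ ^ 2 + ‖l * t‖ ^ 2 < 1} := by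
    intro t ht
    rw [mem_ball, dist_eq_norm] at ht
    rw [Set.mem_ofPred_eq]
    rw [key2]
    have : ‖t - (al p l - p)‖ ^ 2 < be p l ^ 2 := by gcongr
    nlinarith
  have hψ : Differentiable ℂ (fun t : ℂ => ψ.eval (p + t)) :=
    ψ.differentiable.comp (by fun_prop)
  have h0 := Complex.circleIntegral_eq_zero_of_differentiable_on_off_countable
    (f := fun t => ψ.eval (p + t) * F t) (c := (al p l : ℂ) - p) (R := be p l) hbe.le countable_empty
    (hψ.continuous.continuousOn.mul (hc.mono s1))
    (fun z hz => (hψ z).mul ((hd.mono s2).differentiableAt (isOpen_ball.mem_nhds hz.1)))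
  rw [← h0, circleIntegral, JJ]
  apply intervalIntegral.integral_congr
  intro θ _
  simp only [deriv_circleMap, smul_eq_mul, pm, gam, zth]
  have e1 : circleMap ((al p l : ℂ) - p) (be p l) θ = zz p (θ, l) - p := by
    simp [circleMap, zz]; ring
  have e2 : circleMap 0 (be p l) θ = be p l * Complex.exp (θ * Complex.I) := by
    simp [circleMap]
  rw [e1, e2, hb (zz p (θ, l) - p)]
  · simp; ring
  · rw [← e1]
    have := key (be p l * Complex.exp (θ * Complex.I))
    simp only [circleMap]
    rw [this]
    simp [Complex.norm_exp_ofReal_mul_I]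

/-- Riemann-Lebesgue -/
theorem RL (h : ℝ → ℂ) : Tendsto (fun k : ℕ => ∫ θ in (0 : ℝ)..(2 * Real.pi),
    Complex.exp (k * θ * Complex.I) * h θ) atTop (𝓝 0) := by
  have h1 := Real.tendsto_integral_exp_smul_cocompact (indicator (Ioc 0 (2 * Real.pi)) h)
  have h2 : Tendsto (fun k : ℕ => -(k : ℝ) / (2 * Real.pi)) atTop (cocompact ℝ) := by
    have : Tendsto (fun k : ℕ => -(k : ℝ) / (2 * Real.pi)) atTop atBot := by
      have := (tendsto_natCast_atTop_atTop (R := ℝ)).atTop_div_const (by positivity : 0 < 2 * Real.pi)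
      have := tendsto_neg_atTop_atBot.comp this
      refine this.congr fun k => ?_
      simp [neg_div]
    exact this.mono_right atBot_le_cocompact
  refine (h1.comp h2).congr fun k => ?_
  rw [intervalIntegral.integral_of_le (by positivity), ← MeasureTheory.integral_indicator measurableSet_Ioc]
  simp only [Function.comp_apply]
  congr 1
  funext v
  rw [Circle.smul_def, Real.fourierChar_apply]
  by_cases hv : v ∈ Ioc 0 (2 * Real.pi)
  · simp only [indicator_of_mem hv, smul_eq_mul]
    congr 2
    have : (Real.pi : ℂ) ≠ 0 := by exact_mod_cast Real.pi_ne_zero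
    push_cast
    field_simp
  · simp [indicator_of_notMem hv]

theorem poly_int {c : ℝ → ℂ} (hc : Continuous c) (P : Polynomial ℂ) :
    IntervalIntegrable (fun θ : ℝ => P.eval (Complex.exp (θ * Complex.I)) * c θ)
      MeasureTheory.volume 0 (2 * Real.pi) := by
  have : Continuous fun θ : ℝ => P.eval (Complex.exp (θ * Complex.I)) :=
    P.continuous.comp (by fun_prop)
  exact (this.mul hc).intervalIntegrable _ _

noncomputable def Lam (c : ℝ → ℂ) (P : Polynomial ℂ) : ℂ :=
  ∫ θ in (0 : ℝ)..(2 * Real.pi), P.eval (Complex.exp (θ * Complex.I)) * c θ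

theorem Lam_add {c : ℝ → ℂ} (hc : Continuous c) (P Q : Polynomial ℂ) :
    Lam c (P + Q) = Lam c P + Lam c Q := by
  rw [Lam, Lam, Lam, ← intervalIntegral.integral_add (poly_int hc P) (poly_int hc Q)]
  simp [add_mul]
theorem Lam_sub {c : ℝ → ℂ} (hc : Continuous c) (P Q : Polynomial ℂ) :
    Lam c (P - Q) = Lam c P - Lam c Q := by
  rw [Lam, Lam, Lam, ← intervalIntegral.integral_sub (poly_int hc P) (poly_int hc Q)]
  simp [sub_mul]

open Polynomial in
theorem caseI {c : ℝ → ℂ} (hc : Continuous c) {b : ℂ} (hb : b ≠ 0) {l n : ℕ}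
    (h1 : ∀ ψ, Lam c (ψ * X ^ l * X) = 0)
    (h2 : ∀ ψ, Lam c (ψ * (1 - C b * X) ^ n * (X - C b) ^ l * X) = 0) (ψ : Polynomial ℂ) :
    Lam c (ψ * X) = 0 := by
  have c1 : IsCoprime (X : Polynomial ℂ) (1 - C b * X) := ⟨C b, 1, by ring⟩
  have c2 : IsCoprime (X : Polynomial ℂ) (X - C b) := ⟨C b⁻¹, -C b⁻¹, by
    have : (C b⁻¹ * C b : Polynomial ℂ) = 1 := by rw [← C_mul, inv_mul_cancel₀ hb, C_1]
    linear_combination this⟩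
  have c3 : IsCoprime ((X : Polynomial ℂ) ^ l) ((1 - C b * X) ^ n * (X - C b) ^ l) :=
    IsCoprime.pow_left (IsCoprime.mul_right c1.pow_right c2.pow_right)
  obtain ⟨u, v, huv⟩ := c3
  have : ψ * X = (ψ * u) * X ^ l * X + (ψ * v) * (1 - C b * X) ^ n * (X - C b) ^ l * X := by
    linear_combination -(ψ * X) * huv
  rw [this, Lam_add hc, h1, h2, add_zero]

open Polynomial in
theorem caseII_step {c : ℝ → ℂ} (hc : Continuous c) {N : ℕ}
    (h : ∀ ψ, Lam c (ψ * (X - 1) ^ (N + 1) * X) = 0) (ψ : Polynomial ℂ) :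
    Lam c (ψ * (X - 1) ^ N * X) = 0 := by
  set b : ℕ → ℂ := fun k => Lam c (X ^ k * (ψ * (X - 1) ^ N * X)) with hb
  have h1 : ∀ k, b (k + 1) = b k := by
    intro k
    have := h (X ^ k * ψ)
    rw [show X ^ k * ψ * (X - 1) ^ (N + 1) * X = X ^ (k + 1) * (ψ * (X - 1) ^ N * X) -
      X ^ k * (ψ * (X - 1) ^ N * X) by ring, Lam_sub hc] at this
    exact sub_eq_zero.1 this
  have h2 : ∀ k, b k = b 0 := by
    intro k
    induction k with
    | zero => rfl
    | succ k ih => rw [h1, ih]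
  have h3 : Tendsto b atTop (𝓝 0) := by
    refine (RL (fun θ => (ψ * (X - 1) ^ N * X).eval (Complex.exp (θ * Complex.I)) * c θ)).congr ?_
    intro k
    simp only [hb, Lam]
    apply intervalIntegral.integral_congr
    intro θ _
    simp only [eval_mul, eval_pow, eval_X, mul_assoc, ← Complex.exp_nat_mul]
  have h4 := tendsto_nhds_unique (h3.congr h2) tendsto_const_nhds
  have h5 : b 0 = Lam c (ψ * (X - 1) ^ N * X) := by simp [hb]
  rw [← h5, ← h4]

open Polynomial in
theorem caseII {c : ℝ → ℂ} (hc : Continuous c) {l n : ℕ}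
    (h2 : ∀ ψ, Lam c (ψ * (1 - C (1 : ℂ) * X) ^ n * (X - C 1) ^ l * X) = 0) (ψ : Polynomial ℂ) :
    Lam c (ψ * X) = 0 := by
  have h3 : ∀ ψ, Lam c (ψ * (X - 1) ^ (n + l) * X) = 0 := by
    intro ψ
    have := h2 (ψ * (-1) ^ n)
    rw [← this]
    congr 1
    rw [C_1, pow_add, show (1 - 1 * X : Polynomial ℂ) = (-1) * (X - 1) by ring, mul_pow]
    rw [show ψ * (-1) ^ n * ((-1) ^ n * (X - 1) ^ n) * (X - 1) ^ l * X =
      ((-1) ^ n * (-1) ^ n) * (ψ * ((X - 1) ^ n * (X - 1) ^ l) * X) by ring, ← mul_pow]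
    simp
  have h4 : ∀ N, (∀ ψ, Lam c (ψ * (X - 1) ^ N * X) = 0) → ∀ ψ, Lam c (ψ * X) = 0 := by
    intro N
    induction N with
    | zero => intro h; simpa using h
    | succ N ih => intro h; exact ih (caseII_step hc h)
  exact h4 _ h3 ψ

/-- jets condition: normalized hypothesis -/
def JC (g : ℂ × ℂ → ℂ) : Prop := ∀ l n k : ℕ, 1 ≤ k →
  ∫ θ in (0 : ℝ)..(2 * Real.pi), Complex.exp (k * θ * Complex.I) * cc g l n θ = 0

/-- analytic on sphere -/
def AS (g : ℂ × ℂ → ℂ) : Prop := ∀ z : ℂ × ℂ, ‖z.1‖ ^ 2 + ‖z.2‖ ^ 2 = 1 → AnalyticAt ℝ g z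

def LH (p : ℝ) (g : ℂ × ℂ → ℂ) : Prop := ∀ l : ℂ, ∃ F : ℂ → ℂ,
  ContinuousOn F {t : ℂ | ‖(p : ℂ) + t‖ ^ 2 + ‖l * t‖ ^ 2 ≤ 1} ∧
      DifferentiableOn ℂ F {t : ℂ | ‖(p : ℂ) + t‖ ^ 2 + ‖l * t‖ ^ 2 < 1} ∧
      ∀ t : ℂ, ‖(p : ℂ) + t‖ ^ 2 + ‖l * t‖ ^ 2 = 1 → F t = g (p + t, l * t)

theorem AS.AG {g : ℂ × ℂ → ℂ} (h : AS g) {p : ℝ} (hp : p ∈ Icc (0 : ℝ) 1) : AG p g :=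
  fun y => h _ (gam_sphere hp y)

theorem cc_cont {g : ℂ × ℂ → ℂ} (h : AS g) (l n : ℕ) : Continuous (cc g l n) := by
  have h1 := ((h.AG zero_mem_I).LPn n).d2n l
  have h2 := (h1.comp zero_mem_I).continuous.comp (by fun_prop : Continuous fun θ : ℝ => (θ, (0 : ℂ)))
  refine h2.congr fun θ => ?_
  have h1 : ss 0 = 0 := by simp [ss]
  simp [gam, zz, al, be, kap, h1, cc]

theorem JC_of {g : ℂ × ℂ → ℂ} (h : ∀ l n ψ, Lam (cc g l n) (ψ * Polynomial.X) = 0) : JC g := by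
  intro l n k hk
  obtain ⟨k, rfl⟩ := Nat.exists_eq_add_of_le' hk
  have := h l n (Polynomial.X ^ k)
  rw [← this, Lam]
  apply intervalIntegral.integral_congr
  intro θ _
  simp only [Polynomial.eval_mul, Polynomial.eval_pow, Polynomial.eval_X, mul_assoc]
  rw [Complex.exp_nat_mul, pow_succ, mul_assoc]

theorem JC_I {g : ℂ × ℂ → ℂ} (hg : AS g) {b : ℝ} (hb : 0 < b) (hb1 : b ≤ 1) (h0 : LH 0 g)
    (h1 : LH b g) : JC g := by
  apply JC_of
  intro l n ψ
  have hp : b ∈ Icc (0 : ℝ) 1 := ⟨hb.le, hb1⟩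
  refine caseI (cc_cont hg l n) (b := (b : ℂ)) (l := l) (n := n) (by exact_mod_cast hb.ne') ?_ ?_ ψ
  · intro ψ
    have := V_jet zero_mem_I (hg.AG zero_mem_I) (line_V zero_mem_I h0) l n ψ
    simpa [Lam] using this
  · intro ψ
    exact V_jet hp (hg.AG hp) (line_V hp h1) l n ψ

theorem JC_II {g : ℂ × ℂ → ℂ} (hg : AS g) (h1 : LH 1 g) : JC g := by
  apply JC_of
  intro l n ψ
  have hp : (1 : ℝ) ∈ Icc (0 : ℝ) 1 := by simp
  refine caseII (cc_cont hg l n) (l := l) (n := n) ?_ ψ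
  intro ψ
  have := V_jet hp (hg.AG hp) (line_V hp h1) l n ψ
  simpa only [Complex.ofReal_one, Lam] using this
end

section
open Metric Set Filter
open scoped ENNReal NNReal Topology ContDiff ComplexConjugate

noncomputable def QF (h : ℝ → ℂ) (k : ℤ) : ℂ :=
  ∫ φ in (0 : ℝ)..(2 * Real.pi), h φ * Complex.exp (-(k * φ * Complex.I))

theorem FS {h : ℝ → ℂ} (hc : Continuous h) (hper : Function.Periodic h (2 * Real.pi))
    (hs : Summable (QF h)) (x : ℝ) :
    HasSum (fun k : ℤ => 1 / (2 * Real.pi) * QF h k * Complex.exp (k * x * Complex.I)) (h x) := by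
  have : Fact (0 < 2 * Real.pi) := ⟨by positivity⟩
  have hpi : (Real.pi : ℂ) ≠ 0 := by exact_mod_cast Real.pi_ne_zero
  let f : C(AddCircle (2 * Real.pi), ℂ) := ⟨hper.lift, by
    exact continuous_coinduced_dom.2 hc⟩
  have hf : ∀ x : ℝ, f (x : AddCircle (2 * Real.pi)) = h x := fun x => hper.lift_coe x
  have hco : ∀ k, fourierCoeff f k = 1 / (2 * Real.pi) * QF h k := by
    intro k
    rw [fourierCoeff_eq_intervalIntegral f k 0, QF, zero_add, Complex.real_smul]
    congr 1
    · push_cast; rfl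
    · apply intervalIntegral.integral_congr
      intro φ _
      simp only [hf, fourier_coe_apply, smul_eq_mul]
      rw [mul_comm]
      congr 2
      push_cast
      field_simp
  have h1 : Summable (fourierCoeff f) := by
    rw [show fourierCoeff f = fun k => 1 / (2 * Real.pi) * QF h k from funext hco]
    exact hs.mul_left _
  have h2 := has_pointwise_sum_fourier_series_of_summable h1 (x : AddCircle (2 * Real.pi))
  rw [hf] at h2
  convert h2 using 2 with k
  rw [hco, fourier_coe_apply, smul_eq_mul]
  congr 2
  push_cast
  field_simp

theorem FS0 {h : ℝ → ℂ} (hc : Continuous h) (hper : Function.Periodic h (2 * Real.pi))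
    (h0 : ∀ k, QF h k = 0) (x : ℝ) : h x = 0 := by
  have h1 : QF h = fun _ => 0 := funext h0
  have h2 := FS hc hper (by rw [h1]; exact summable_zero) x
  simp only [h0, mul_zero, zero_mul] at h2
  exact h2.unique hasSum_zero

theorem QF_exp (j k : ℤ) : QF (fun φ => Complex.exp (j * φ * Complex.I)) k =
    if k = j then 2 * Real.pi else 0 := by
  have h1 : QF (fun φ => Complex.exp (j * φ * Complex.I)) k =
      ∫ φ in (0 : ℝ)..(2 * Real.pi), Complex.exp (-((k - j : ℤ) * φ * Complex.I)) := by
    rw [QF]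
    apply intervalIntegral.integral_congr
    intro φ _
    simp only [← Complex.exp_add]
    congr 1; push_cast; ring
  rw [h1]
  split_ifs with hjk
  · subst hjk; simp
  · exact exp_int_zero (sub_ne_zero.2 hjk)

theorem ei_per (x : ℝ) : Complex.exp ((x + 2 * Real.pi : ℝ) * Complex.I) = Complex.exp (x * Complex.I) := by
  rw [← Complex.exp_periodic (x * Complex.I)]; congr 1; push_cast; ring

/-- the rotation averages -/
noncomputable def fd (d : ℤ) (g : ℂ × ℂ → ℂ) (z : ℂ × ℂ) : ℂ :=
  QF (fun θ => g (Complex.exp (θ * Complex.I) * z.1, Complex.exp (θ * Complex.I) * z.2)) d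

noncomputable def qq (d : ℤ) (g : ℂ × ℂ → ℂ) : ℂ → ℂ := JJ 0 (pm (fun z => z ^ (-d - 1)) g)

theorem qq_an {g : ℂ × ℂ → ℂ} (hg : AS g) (d : ℤ) : An (qq d g) :=
  JJ_an zero_mem_I ((hg.AG zero_mem_I).pm fun y => analyticAt_id.zpow (zz0_ne y))

theorem be0 (l : ℂ) : be 0 l = (Real.sqrt (1 + ss l))⁻¹ := by
  have h1 : Real.sqrt (1 + ss l) ≠ 0 := (Real.sqrt_pos.2 (ss_pos l)).ne'
  have h2 := Real.sq_sqrt (ss_pos l).le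
  have h3 := (ss_pos l).ne'
  simp only [be, kap]
  field_simp
  simp
  rw [← sq, h2]

theorem fd_qq (d : ℤ) (g : ℂ × ℂ → ℂ) {z : ℂ × ℂ} (hz : ‖z.1‖ ^ 2 + ‖z.2‖ ^ 2 = 1) (h0 : z.1 ≠ 0) :
    z.1 ^ d * qq d g (z.2 / z.1) = Complex.I * fd d g z := by
  set l := z.2 / z.1 with hl
  have hn : 0 < ‖z.1‖ := norm_pos_iff.2 h0
  have hbe : be 0 l = ‖z.1‖ := by
    rw [be0]
    have h3 : ss l = ‖l‖ ^ 2 := by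
      rw [← Complex.normSq_eq_norm_sq, Complex.normSq_apply, ss]; ring
    have : 1 + ss l = (‖z.1‖⁻¹) ^ 2 := by
      rw [h3, hl, norm_div]; field_simp; exact hz
    rw [this, Real.sqrt_sq (by positivity), inv_inv]
  set w : ℂ := z.1 / ‖z.1‖ with hw
  set α := Complex.arg z.1 with hα
  have hz1 : z.1 = ‖z.1‖ * Complex.exp (α * Complex.I) := (Complex.norm_mul_exp_arg_mul_I _).symm
  set H : ℝ → ℂ := fun θ => g (Complex.exp (θ * Complex.I) * z.1, Complex.exp (θ * Complex.I) * z.2) *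
    Complex.exp (-(d * θ * Complex.I)) with hH
  have hHp : Function.Periodic H (2 * Real.pi) := by
    intro x
    have e : ∀ x : ℝ, Complex.exp (-(d * x * Complex.I)) = Complex.exp (x * Complex.I) ^ (-d) := by
      intro x; rw [← Complex.exp_int_mul]; congr 1; push_cast; ring
    simp only [hH, e, ei_per]
  have h1 : fd d g z = ∫ θ in (0 : ℝ)..(2 * Real.pi), H (θ - α) := by
    rw [intervalIntegral.integral_comp_sub_right (fun θ => H θ)]
    have := hHp.intervalIntegral_add_eq 0 (0 - α)
    rw [zero_add] at this
    rw [show 2 * Real.pi - α = 0 - α + 2 * Real.pi by ring, ← this]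
    rfl
  rw [h1, qq, JJ, ← intervalIntegral.integral_const_mul, ← intervalIntegral.integral_const_mul]
  apply intervalIntegral.integral_congr
  intro θ _
  have e1 : zz 0 (θ, l) = Complex.exp ((θ - α : ℝ) * Complex.I) * z.1 := by
    have : Complex.exp (θ * Complex.I) = Complex.exp ((θ - α : ℝ) * Complex.I) * Complex.exp (α * Complex.I) := by
      rw [← Complex.exp_add]; congr 1; push_cast; ring
    simp only [zz]
    rw [hbe, this]
    conv_rhs => rw [hz1]
    simp [al]; ring
  have e2 : zth 0 (θ, l) = Complex.I * zz 0 (θ, l) := by simp [zth, zz, al]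
  simp only [pm, gam, e2, hH]
  rw [e1]
  have e3 : l * (Complex.exp ((θ - α : ℝ) * Complex.I) * z.1 - (0 : ℝ)) =
      Complex.exp ((θ - α : ℝ) * Complex.I) * z.2 := by
    rw [hl]; push_cast; field_simp; ring
  rw [e3]
  have e : ∀ x : ℝ, Complex.exp (-(d * x * Complex.I)) = Complex.exp (x * Complex.I) ^ (-d) := by
      intro x; rw [← Complex.exp_int_mul]; congr 1; push_cast; ring
  rw [e]
  set E := Complex.exp ((θ - α : ℝ) * Complex.I) with hE
  have hE0 : E ≠ 0 := Complex.exp_ne_zero _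
  have e4 : (E * z.1) ^ (-d - 1) * (E * z.1) = E ^ (-d) * z.1 ^ (-d) := by
    rw [← zpow_add_one₀ (mul_ne_zero hE0 h0), sub_add_cancel, mul_zpow]
  have e5 : z.1 ^ d * z.1 ^ (-d) = 1 := by rw [← zpow_add₀ h0]; simp
  linear_combination (z.1 ^ d * g (E * z.1, E * z.2) * Complex.I) * e4 +
    (E ^ (-d) * g (E * z.1, E * z.2) * Complex.I) * e5

theorem qq_inv (d : ℤ) (g : ℂ × ℂ → ℂ) {l : ℂ} (hl : l ≠ 0) :
    qq d g l = l ^ d * qq d (fun z => g z.swap) l⁻¹ := by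
  have hb : (be 0 l : ℂ) ≠ 0 := by
    have : 0 < be 0 l := div_pos (kap_pos zero_mem_I l) (ss_pos l)
    exact_mod_cast this.ne'
  have hz := gam_sphere zero_mem_I (0, l)
  have hg : gam 0 (0, l) = (↑(be 0 l), l * be 0 l) := by
    simp [gam, zz, al]
  rw [hg] at hz
  have h1 := fd_qq d g (z := (↑(be 0 l), l * be 0 l)) hz hb
  have h2 := fd_qq d (fun z => g z.swap) (z := (l * be 0 l, ↑(be 0 l)))
    (by rw [add_comm]; exact hz) (mul_ne_zero hl hb)
  have h3 : fd d (fun z => g z.swap) (l * be 0 l, ↑(be 0 l)) = fd d g (↑(be 0 l), l * be 0 l) := rfl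
  rw [h3, ← h1] at h2
  simp only at h2
  rw [mul_div_cancel_right₀ _ hb, div_mul_cancel_right₀ hb, mul_zpow] at h2
  have hb' : (be 0 l : ℂ) ^ d ≠ 0 := zpow_ne_zero _ hb
  apply mul_left_cancel₀ hb'
  linear_combination -h2

theorem QQ_inv (d k : ℤ) (g : ℂ × ℂ → ℂ) {r : ℝ} (hr : 0 < r) :
    QQ k (qq d g) r = (r : ℂ) ^ d * QQ (d - k) (qq d (fun z => g z.swap)) r⁻¹ := by
  set q := qq d (fun z => g z.swap) with hq
  set H : ℝ → ℂ := fun φ => q ((r⁻¹ : ℝ) * Complex.exp (φ * Complex.I)) *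
    Complex.exp (-((d - k : ℤ) * φ * Complex.I)) with hH
  have e : ∀ (m : ℤ) (x : ℝ), Complex.exp (-(m * x * Complex.I)) = Complex.exp (x * Complex.I) ^ (-m) := by
      intro m x; rw [← Complex.exp_int_mul]; congr 1; push_cast; ring
  have hHp : Function.Periodic H (2 * Real.pi) := by
    intro x
    simp only [hH, e, ei_per]
  have h1 : QQ (d - k) q r⁻¹ = ∫ φ in (0 : ℝ)..(2 * Real.pi), H (-φ) := by
    rw [intervalIntegral.integral_comp_neg (fun θ => H θ)]
    have := hHp.intervalIntegral_add_eq 0 (-(2 * Real.pi))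
    rw [zero_add, neg_add_cancel] at this
    rw [neg_zero, ← this]
    rfl
  rw [h1, QQ, ← intervalIntegral.integral_const_mul]
  apply intervalIntegral.integral_congr
  intro φ _
  have hr' : (r : ℂ) ≠ 0 := by exact_mod_cast hr.ne'
  simp only [hH, e]
  set E := Complex.exp (φ * Complex.I) with hE
  have hE0 : E ≠ 0 := Complex.exp_ne_zero _
  have hE2 : Complex.exp ((-φ : ℝ) * Complex.I) = E⁻¹ := by
    rw [hE, ← Complex.exp_neg]; push_cast; congr 1; ring
  rw [qq_inv d g (mul_ne_zero hr' hE0), ← hq, hE2, mul_zpow, mul_inv]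
  have : (E⁻¹) ^ (-(d - k)) = E ^ d * E ^ (-k) := by
    rw [inv_zpow', ← zpow_add₀ hE0]; congr 1; ring
  rw [this]
  push_cast
  ring

theorem AS.swap {g : ℂ × ℂ → ℂ} (hg : AS g) : AS (fun z => g z.swap) := by
  intro z hz
  have h1 : AnalyticAt ℝ (fun z : ℂ × ℂ => z.swap) z :=
    (ContinuousLinearEquiv.prodComm ℝ ℂ ℂ).toContinuousLinearMap.analyticAt z
  exact (hg z.swap (by rw [add_comm]; exact hz)).fun_comp h1

theorem qq_high {g : ℂ × ℂ → ℂ} (hg : AS g) (hJ : JC g) (d k : ℤ) (N : ℕ) (hN : 2 * d - k < N) :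
    iteratedDeriv N (QQ k (qq d g)) 0 = 0 := by
  refine QQ_high (qq_an hg d) ?_ N hN
  intro l n hln
  rw [qq, q_jet (hg.AG zero_mem_I)]
  obtain ⟨j, hj⟩ := Int.eq_ofNat_of_zero_le (a := (l : ℤ) - d) (by omega)
  have := hJ l n j (by omega)
  rw [hj]
  simp only [Int.cast_natCast]
  rw [this, mul_zero]

theorem jet_zero {Q : ℝ → ℂ} (hQ : An Q) (h : ∀ N, iteratedDeriv N Q 0 = 0) (r : ℝ) : Q r = 0 := by
  obtain ⟨p, R, hp⟩ := hQ 0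
  have h1 : Q =ᶠ[𝓝 0] fun _ => 0 := by
    have := hp.eventually_hasSum
    filter_upwards [this] with y hy
    rw [zero_add] at hy
    refine hy.unique ?_
    convert hasSum_zero with N
    rw [jet_coeff hp, h N]; simp
  have h2 : AnalyticOnNhd ℝ Q univ := fun x _ => hQ x
  have h3 : AnalyticOnNhd ℝ (fun _ : ℝ => (0 : ℂ)) univ := fun x _ => analyticAt_const
  exact congrFun (h2.eq_of_eventuallyEq h3 h1) r

theorem QQ_all {g : ℂ × ℂ → ℂ} (hg : AS g) (hJ : JC g) (d k : ℤ) :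
    ((0 ≤ k ∧ k ≤ d) → ∃ c : ℂ, ∀ r : ℝ, QQ k (qq d g) r = c * (r : ℂ) ^ k.toNat) ∧
    (¬ (0 ≤ k ∧ k ≤ d) → ∀ r, QQ k (qq d g) r = 0) := by
  have hq := qq_an hg d
  have hlow := fun N => QQ_low (m := k) hq N
  have hhigh := qq_high hg hJ d k
  by_cases hkd : k ≤ d
  · have hO : QQ k (qq d g) =O[atTop] fun r : ℝ => r ^ k := by
      have h1 := jet_small (QQ_an (m := d - k) (qq_an hg.swap d)) (d - k).natAbs
        (fun N hN => QQ_low (qq_an hg.swap d) N (by rw [Int.abs_eq_natAbs]; exact_mod_cast hN))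
      have h2 := h1.comp_tendsto tendsto_inv_atTop_zero
      have h3 : (fun r : ℝ => (r : ℂ) ^ d) =O[atTop] fun r : ℝ => r ^ d := by
        apply Asymptotics.isBigO_of_le
        intro r; simp
      refine (h3.mul h2).congr' ?_ ?_
      · filter_upwards [eventually_gt_atTop 0] with r hr
        rw [QQ_inv d k g hr]; rfl
      · filter_upwards [eventually_gt_atTop 0] with r hr
        obtain ⟨j, hj⟩ := Int.eq_ofNat_of_zero_le (a := d - k) (by omega)
        have : (d - k).natAbs = j := by omega
        simp only [Function.comp_apply, this, Real.norm_eq_abs, abs_of_pos (inv_pos.2 hr)]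
        rw [inv_pow, ← zpow_natCast, ← zpow_neg, ← zpow_add₀ hr.ne']
        congr 1
        omega
    have hm := Q_mono (QQ_an (m := k) hq) k (2 * d - k).toNat hlow
      (fun N hN => hhigh N (by omega)) hO
    refine ⟨fun h => hm.1 h.1, fun h => hm.2 (by omega)⟩
  · have h0 : ∀ N, iteratedDeriv N (QQ k (qq d g)) 0 = 0 := by
      intro N
      by_cases hN : (N : ℤ) < |k|
      · exact hlow N hN
      · apply hhigh
        have := le_abs_self k
        omega
    refine ⟨fun h => absurd h.2 hkd, fun _ => ?_⟩
    exact jet_zero (QQ_an hq) h0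
end

section
open Metric Set Filter
open scoped ENNReal NNReal Topology ContDiff ComplexConjugate

theorem QF_sub {h1 h2 : ℝ → ℂ} (c1 : Continuous h1) (c2 : Continuous h2) (k : ℤ) :
    QF (fun φ => h1 φ - h2 φ) k = QF h1 k - QF h2 k := by
  simp only [QF, sub_mul]
  apply intervalIntegral.integral_sub <;> apply Continuous.intervalIntegrable <;> fun_prop

theorem QF_sum {ι : Type*} (s : Finset ι) {h : ι → ℝ → ℂ} (c1 : ∀ i, Continuous (h i)) (k : ℤ) :
    QF (fun φ => ∑ i ∈ s, h i φ) k = ∑ i ∈ s, QF (h i) k := by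
  simp only [QF, Finset.sum_mul]
  apply intervalIntegral.integral_finsetSum
  intro i _
  have := c1 i
  apply Continuous.intervalIntegrable; fun_prop

theorem QF_const_mul (c : ℂ) (h : ℝ → ℂ) (k : ℤ) :
    QF (fun φ => c * h φ) k = c * QF h k := by
  simp only [QF, mul_assoc]
  exact intervalIntegral.integral_const_mul _ _

theorem qq_poly {g : ℂ × ℂ → ℂ} (hg : AS g) (hJ : JC g) (d : ℤ) : ∃ c : ℕ → ℂ, ∀ l,
    qq d g l = ∑ k ∈ Finset.range (d + 1).toNat, c k * l ^ k := by
  have h1 : ∀ k : ℕ, ∃ c : ℂ, (k : ℤ) ≤ d → ∀ r : ℝ, QQ k (qq d g) r = c * (r : ℂ) ^ k := by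
    intro k
    by_cases hk : (k : ℤ) ≤ d
    · obtain ⟨c, hc⟩ := (QQ_all hg hJ d k).1 ⟨by simp, hk⟩
      exact ⟨c, fun _ r => by simpa using hc r⟩
    · exact ⟨0, fun h => absurd h hk⟩
  choose c' hc' using h1
  have hpi : (Real.pi : ℂ) ≠ 0 := by exact_mod_cast Real.pi_ne_zero
  refine ⟨fun k => c' k / (2 * Real.pi), fun l => ?_⟩
  set r := ‖l‖
  have hqc : Continuous (qq d g) := ((an_iff _).1 (qq_an hg d)).continuous
  have c1 : Continuous fun φ : ℝ => qq d g (r * Complex.exp (φ * Complex.I)) := by fun_prop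
  have c2 : ∀ k : ℕ, Continuous fun φ : ℝ => (c' k / (2 * Real.pi) * (r : ℂ) ^ k) *
      Complex.exp ((k : ℤ) * φ * Complex.I) := by intro k; fun_prop
  have e : ∀ (m : ℤ) (x : ℝ), Complex.exp (m * x * Complex.I) = Complex.exp (x * Complex.I) ^ m := by
      intro m x; rw [← Complex.exp_int_mul]; congr 1; ring
  have key := FS0 (h := fun φ => qq d g (r * Complex.exp (φ * Complex.I)) -
    ∑ k ∈ Finset.range (d + 1).toNat, (c' k / (2 * Real.pi) * (r : ℂ) ^ k) *
      Complex.exp ((k : ℤ) * φ * Complex.I)) (c1.sub (continuous_finsetSum _ fun k _ => c2 k))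
    (by intro x; simp only [e, ei_per]) (by
      intro j
      rw [QF_sub c1 (continuous_finsetSum _ fun k _ => c2 k), QF_sum _ c2]
      simp only [QF_const_mul, QF_exp]
      have hQ : QF (fun φ : ℝ => qq d g (r * Complex.exp (φ * Complex.I))) j = QQ j (qq d g) r := rfl
      rw [hQ]
      by_cases hj : 0 ≤ j ∧ j ≤ d
      · obtain ⟨j', rfl⟩ := Int.eq_ofNat_of_zero_le hj.1
        rw [hc' j' hj.2, Finset.sum_eq_single j']
        · simp; field_simp; simp
        · intro b _ hb
          rw [if_neg (by intro h; apply hb; exact_mod_cast h.symm)]; simp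
        · intro h
          exfalso; apply h
          rw [Finset.mem_range]; omega
      · rw [(QQ_all hg hJ d j).2 hj, Finset.sum_eq_zero, sub_zero]
        intro k hk
        rw [Finset.mem_range] at hk
        rw [if_neg (by rintro rfl; apply hj; omega)]; simp) l.arg
  have hl : (r : ℂ) * Complex.exp (l.arg * Complex.I) = l := Complex.norm_mul_exp_arg_mul_I _
  simp only [hl] at key
  rw [sub_eq_zero.1 key]
  apply Finset.sum_congr rfl
  intro k _
  rw [e, zpow_natCast, mul_assoc, ← mul_pow, hl]

theorem fd_neg {g : ℂ × ℂ → ℂ} (hg : AS g) (hJ : JC g) {d : ℤ} (hd : d < 0) {z : ℂ × ℂ}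
    (hz : ‖z.1‖ ^ 2 + ‖z.2‖ ^ 2 = 1) : fd d g z = 0 := by
  obtain ⟨c, hc⟩ := qq_poly hg hJ d
  have h0 : ∀ l, qq d g l = 0 := by
    intro l; rw [hc, show (d + 1).toNat = 0 by omega]; simp
  by_cases h1 : z.1 = 0
  · have h2 : z.2 ≠ 0 := by
      intro h; rw [h1, h] at hz; simp at hz
    have h3 := fd_qq d (fun z => g z.swap) (z := z.swap) (by rw [add_comm]; exact hz) h2
    have h4 : qq d (fun z => g z.swap) = fun _ => 0 := by
      have hqc : Continuous (qq d (fun z => g z.swap)) := ((an_iff _).1 (qq_an hg.swap d)).continuous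
      refine hqc.ext_on (dense_compl_singleton (0 : ℂ)) continuous_const ?_
      intro l hl
      have := qq_inv d (fun z => g z.swap) (l := l) hl
      simp only [Prod.swap_swap, h0, mul_zero] at this
      exact this
    rw [h4, mul_zero] at h3
    have h5 : fd d (fun z => g z.swap) z.swap = fd d g z := rfl
    rw [h5] at h3
    simpa using h3.symm
  · have := fd_qq d g hz h1
    rw [h0, mul_zero] at this
    simpa using this.symm

theorem fd_pos {g : ℂ × ℂ → ℂ} (hg : AS g) (hJ : JC g) (d : ℕ) : ∃ c : ℕ → ℂ, ∀ z : ℂ × ℂ,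
    ‖z.1‖ ^ 2 + ‖z.2‖ ^ 2 = 1 →
      fd d g z = ∑ k ∈ Finset.range (d + 1), c k * z.1 ^ (d - k) * z.2 ^ k := by
  obtain ⟨c, hc⟩ := qq_poly hg hJ d
  rw [show ((d : ℤ) + 1).toNat = d + 1 by omega] at hc
  refine ⟨fun k => -Complex.I * c k, fun z hz => ?_⟩
  suffices h : Complex.I * fd d g z = ∑ k ∈ Finset.range (d + 1), c k * z.1 ^ (d - k) * z.2 ^ k by
    have : fd d g z = -Complex.I * (Complex.I * fd d g z) := by
      linear_combination (fd d g z) * Complex.I_sq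
    rw [this, h, Finset.mul_sum]
    apply Finset.sum_congr rfl; intro k _; ring
  by_cases h1 : z.1 = 0
  · have h2 : z.2 ≠ 0 := by
      intro h; rw [h1, h] at hz; simp at hz
    have h3 := fd_qq d (fun z => g z.swap) (z := z.swap) (by rw [add_comm]; exact hz) h2
    have h4 : qq d (fun z => g z.swap) = fun l => ∑ k ∈ Finset.range (d + 1), c k * l ^ (d - k) := by
      have hqc : Continuous (qq d (fun z => g z.swap)) := ((an_iff _).1 (qq_an hg.swap d)).continuous
      refine hqc.ext_on (dense_compl_singleton (0 : ℂ)) (by fun_prop) ?_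
      intro l hl
      have hl' : l ≠ 0 := hl
      have := qq_inv d (fun z => g z.swap) (l := l) hl
      simp only [Prod.swap_swap, hc] at this
      rw [this, Finset.mul_sum]
      apply Finset.sum_congr rfl
      intro k hk
      rw [Finset.mem_range] at hk
      obtain ⟨j, rfl⟩ := Nat.exists_eq_add_of_le (by omega : k ≤ d)
      rw [zpow_natCast, Nat.add_sub_cancel_left, pow_add, inv_pow]
      field_simp
    have h5 : fd d (fun z => g z.swap) z.swap = fd d g z := rfl
    rw [h5] at h3
    rw [← h3, h4]
    simp only [Prod.fst_swap, Prod.snd_swap]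
    rw [zpow_natCast, Finset.mul_sum]
    apply Finset.sum_congr rfl
    intro k hk
    rw [Finset.mem_range] at hk
    obtain ⟨j, rfl⟩ := Nat.exists_eq_add_of_le (by omega : k ≤ d)
    rw [Nat.add_sub_cancel_left, pow_add, div_pow]
    field_simp
  · rw [← fd_qq d g hz h1, hc, zpow_natCast, Finset.mul_sum]
    apply Finset.sum_congr rfl
    intro k hk
    rw [Finset.mem_range] at hk
    obtain ⟨j, rfl⟩ := Nat.exists_eq_add_of_le (by omega : k ≤ d)
    rw [Nat.add_sub_cancel_left, pow_add, div_pow]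
    field_simp
end

section
open Metric Set Filter
open scoped ENNReal NNReal Topology ContDiff ComplexConjugate

noncomputable def DI (g : ℂ × ℂ → ℂ) (z : ℂ × ℂ) : ℂ :=
  fderiv ℝ g z (Complex.I * z.1, Complex.I * z.2)

theorem DI_AS {g : ℂ × ℂ → ℂ} (hg : AS g) : AS (DI g) := by
  intro z hz
  have h1 : AnalyticAt ℝ (fderiv ℝ g) z := (hg z hz).fderiv
  have h2 : AnalyticAt ℝ (fun w : ℂ × ℂ => ((Complex.I * w.1, Complex.I * w.2) : ℂ × ℂ)) z := by
    exact (analyticAt_const.mul analyticAt_fst).prod (analyticAt_const.mul analyticAt_snd)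
  exact ContDiffAt.analyticAt (h1.contDiffAt.clm_apply h2.contDiffAt)

theorem rot_mem {z : ℂ × ℂ} (hz : ‖z.1‖ ^ 2 + ‖z.2‖ ^ 2 = 1) (θ : ℝ) :
    ‖Complex.exp (θ * Complex.I) * z.1‖ ^ 2 + ‖Complex.exp (θ * Complex.I) * z.2‖ ^ 2 = 1 := by
  simpa [Complex.norm_exp_ofReal_mul_I] using hz

theorem rot_cont {g : ℂ × ℂ → ℂ} (hg : AS g) {z : ℂ × ℂ} (hz : ‖z.1‖ ^ 2 + ‖z.2‖ ^ 2 = 1) :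
    Continuous fun θ : ℝ => g (Complex.exp (θ * Complex.I) * z.1, Complex.exp (θ * Complex.I) * z.2) := by
  rw [continuous_iff_continuousAt]
  intro θ
  exact ContinuousAt.comp (f := fun θ : ℝ => ((Complex.exp (θ * Complex.I) * z.1, Complex.exp (θ * Complex.I) * z.2) : ℂ × ℂ))
    (hg _ (rot_mem hz θ)).continuousAt (by fun_prop)

theorem rot_deriv {g : ℂ × ℂ → ℂ} (hg : AS g) {z : ℂ × ℂ} (hz : ‖z.1‖ ^ 2 + ‖z.2‖ ^ 2 = 1) (θ : ℝ) :
    HasDerivAt (fun θ : ℝ => g (Complex.exp (θ * Complex.I) * z.1, Complex.exp (θ * Complex.I) * z.2))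
      (DI g (Complex.exp (θ * Complex.I) * z.1, Complex.exp (θ * Complex.I) * z.2)) θ := by
  have h1 : HasDerivAt (fun θ : ℝ => Complex.exp (θ * Complex.I))
      (Complex.exp (θ * Complex.I) * Complex.I) θ := by
    have h := ((hasDerivAt_id θ).ofReal_comp.mul_const Complex.I).cexp
    simpa using h
  have h2 : HasDerivAt (fun θ : ℝ => ((Complex.exp (θ * Complex.I) * z.1, Complex.exp (θ * Complex.I) * z.2) : ℂ × ℂ))
     (Complex.I * (Complex.exp (θ * Complex.I) * z.1), Complex.I * (Complex.exp (θ * Complex.I) * z.2)) θ :=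
    (((h1.mul_const z.1).prodMk (h1.mul_const z.2))).congr_deriv (by ext <;> simp <;> ring)
  have h3 := (hg (_, _) (rot_mem hz θ)).differentiableAt.hasFDerivAt
  have h4 := h3.comp_hasDerivAt θ h2
  exact h4

theorem fd_DI {g : ℂ × ℂ → ℂ} (hg : AS g) {z : ℂ × ℂ} (hz : ‖z.1‖ ^ 2 + ‖z.2‖ ^ 2 = 1) (d : ℤ) :
    fd d (DI g) z = Complex.I * d * fd d g z := by
  have hE : ∀ θ : ℝ, HasDerivAt (fun θ : ℝ => Complex.exp (-(d * θ * Complex.I)))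
      (Complex.exp (-(d * θ * Complex.I)) * (-(d * Complex.I))) θ := by
    intro θ
    have h := (((hasDerivAt_id θ).ofReal_comp.const_mul (d : ℂ)).mul_const Complex.I).neg.cexp
    simpa using h
  have hc1 := rot_cont hg hz
  have hc2 := rot_cont (DI_AS hg) hz
  have c3 : Continuous fun θ : ℝ => Complex.exp (-(d * θ * Complex.I)) := by fun_prop
  have c4 : Continuous fun θ : ℝ => DI g (Complex.exp (θ * Complex.I) * z.1, Complex.exp (θ * Complex.I) * z.2) *
    Complex.exp (-(d * θ * Complex.I)) := hc2.mul c3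
  have c5 : Continuous fun θ : ℝ => g (Complex.exp (θ * Complex.I) * z.1, Complex.exp (θ * Complex.I) * z.2) *
    (Complex.exp (-(d * θ * Complex.I)) * -(d * Complex.I)) := hc1.mul (c3.mul (continuous_const (y := (-(d * Complex.I)))))
  have key := intervalIntegral.integral_eq_sub_of_hasDerivAt (a := 0) (b := 2 * Real.pi)
    (fun θ _ => (rot_deriv hg hz θ).mul (hE θ)) ((c4.add c5).intervalIntegrable _ _)
  rw [intervalIntegral.integral_add (c4.intervalIntegrable _ _) (c5.intervalIntegrable _ _)] at key
  have e1 : Complex.exp ((2 * Real.pi : ℝ) * Complex.I) = 1 := by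
    push_cast; exact Complex.exp_two_pi_mul_I
  have e2 : Complex.exp (-(d * (2 * Real.pi : ℝ) * Complex.I)) = 1 := by
    rw [Complex.exp_eq_one_iff]; refine ⟨-d, ?_⟩; push_cast; ring
  simp only [Pi.mul_apply, e1, e2] at key
  have e3 : (∫ θ in (0:ℝ)..(2 * Real.pi), g (Complex.exp (θ * Complex.I) * z.1, Complex.exp (θ * Complex.I) * z.2) *
     (Complex.exp (-(d * θ * Complex.I)) * (-(d * Complex.I)))) = -(Complex.I * d) * fd d g z := by
    rw [fd, QF, ← intervalIntegral.integral_const_mul]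
    apply intervalIntegral.integral_congr
    intro θ _
    simp only
    ring
  rw [e3] at key
  have e4 : fd d (DI g) z + -(Complex.I * d) * fd d g z = 0 := by
    refine Eq.trans key ?_
    simp
  linear_combination e4

theorem SS_compact : IsCompact {z : ℂ × ℂ | ‖z.1‖ ^ 2 + ‖z.2‖ ^ 2 = 1} := by
  apply Metric.isCompact_of_isClosed_isBounded
  · exact isClosed_eq (by fun_prop) continuous_const
  · refine (Metric.isBounded_closedBall (x := (0 : ℂ × ℂ)) (r := 1)).subset ?_
    intro z hz
    rw [mem_closedBall_zero_iff, Prod.norm_def]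
    have hz' : ‖z.1‖ ^ 2 + ‖z.2‖ ^ 2 = 1 := hz
    apply max_le <;> nlinarith [norm_nonneg z.1, norm_nonneg z.2, sq_nonneg ‖z.1‖, sq_nonneg ‖z.2‖]

theorem fd_bd {g : ℂ × ℂ → ℂ} (hg : AS g) : ∃ M : ℝ, ∀ (d : ℤ) (z : ℂ × ℂ), ‖z.1‖ ^ 2 + ‖z.2‖ ^ 2 = 1 →
    ‖fd d g z‖ ≤ M := by
  obtain ⟨M, hM⟩ := SS_compact.exists_bound_of_continuousOn (f := g)
    (fun z hz => (hg z hz).continuousAt.continuousWithinAt)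
  refine ⟨M * |2 * Real.pi - 0|, fun d z hz => ?_⟩
  apply intervalIntegral.norm_integral_le_of_norm_le_const
  intro θ _
  rw [norm_mul]
  have : ‖Complex.exp (-(d * θ * Complex.I))‖ = 1 := by
    rw [Complex.norm_exp]; simp
  rw [this, mul_one]
  exact hM (_, _) (rot_mem hz θ)

theorem fd_decay {g : ℂ × ℂ → ℂ} (hg : AS g) : ∃ u : ℕ → ℝ, Summable u ∧ ∀ (d : ℕ) (z : ℂ × ℂ),
    ‖z.1‖ ^ 2 + ‖z.2‖ ^ 2 = 1 → ‖fd d g z‖ ≤ u d := by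
  obtain ⟨M0, h0⟩ := fd_bd hg
  obtain ⟨M2, h2⟩ := fd_bd (DI_AS (DI_AS hg))
  refine ⟨fun d => 2 * (M0 + M2) * (1 / ((d + 1 : ℕ) : ℝ) ^ 2), ?_, ?_⟩
  · apply Summable.mul_left
    exact (summable_nat_add_iff 1).2 (Real.summable_one_div_nat_pow.2 (by norm_num))
  · intro d z hz
    have a0 := h0 d z hz
    have a2 := h2 d z hz
    rw [fd_DI (DI_AS hg) hz, fd_DI hg hz] at a2
    simp only [norm_mul, Complex.norm_I, Int.cast_natCast, Complex.norm_natCast, one_mul] at a2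
    have hd : (0 : ℝ) ≤ d := Nat.cast_nonneg d
    have hn := norm_nonneg (fd d g z)
    show _ ≤ 2 * (M0 + M2) * (1 / ((d + 1 : ℕ) : ℝ) ^ 2)
    rw [mul_one_div, le_div_iff₀ (by positivity)]
    push_cast
    have : ((d : ℝ) + 1) ^ 2 ≤ 2 * (1 + d * d) := by nlinarith [sq_nonneg ((d : ℝ) - 1)]
    nlinarith [mul_le_mul_of_nonneg_left this hn]
end

section
open Metric Set Filter
open scoped ENNReal NNReal Topology ContDiff ComplexConjugate

noncomputable def PP (c : ℕ → ℂ) (d : ℕ) (z : ℂ × ℂ) : ℂ :=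
  ∑ k ∈ Finset.range (d + 1), c k * z.1 ^ (d - k) * z.2 ^ k

theorem PP_diff (c : ℕ → ℂ) (d : ℕ) : Differentiable ℂ (PP c d) := by
  unfold PP; fun_prop

theorem PP_hom (c : ℕ → ℂ) (d : ℕ) (s x y : ℂ) : PP c d (s * x, s * y) = s ^ d * PP c d (x, y) := by
  unfold PP
  rw [Finset.mul_sum]
  apply Finset.sum_congr rfl
  intro k hk
  rw [Finset.mem_range] at hk
  have : s ^ d = s ^ (d - k) * s ^ k := by rw [← pow_add]; congr 1; omega
  simp only [mul_pow, this]; ring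

theorem polar (z : ℂ × ℂ) : ∃ (x y : ℂ), ‖x‖ ^ 2 + ‖y‖ ^ 2 = 1 ∧
    z = ((Real.sqrt (‖z.1‖ ^ 2 + ‖z.2‖ ^ 2) : ℂ) * x, (Real.sqrt (‖z.1‖ ^ 2 + ‖z.2‖ ^ 2) : ℂ) * y) := by
  set N := ‖z.1‖ ^ 2 + ‖z.2‖ ^ 2 with hN
  rcases (show (0 : ℝ) ≤ N by positivity).eq_or_lt with h | h
  · refine ⟨1, 0, by simp, ?_⟩
    have h1 : z.1 = 0 := by
      have : ‖z.1‖ ^ 2 = 0 := by nlinarith [sq_nonneg ‖z.1‖, sq_nonneg ‖z.2‖]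
      simpa using this
    have h2 : z.2 = 0 := by
      have : ‖z.2‖ ^ 2 = 0 := by nlinarith [sq_nonneg ‖z.1‖, sq_nonneg ‖z.2‖]
      simpa using this
    rw [← h]; ext <;> simp [h1, h2]
  · have hs : 0 < Real.sqrt N := Real.sqrt_pos.2 h
    have hs' : (Real.sqrt N : ℂ) ≠ 0 := by exact_mod_cast hs.ne'
    refine ⟨z.1 / Real.sqrt N, z.2 / Real.sqrt N, ?_, ?_⟩
    · simp only [norm_div, div_pow, Complex.norm_real, Real.norm_eq_abs, sq_abs, Real.sq_sqrt h.le]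
      rw [← add_div, ← hN, div_self h.ne']
    · ext <;> simp <;> field_simp

theorem PP_bd {c : ℕ → ℂ} {d : ℕ} {u : ℝ} (h : ∀ z : ℂ × ℂ, ‖z.1‖ ^ 2 + ‖z.2‖ ^ 2 = 1 → ‖PP c d z‖ ≤ u)
    {z : ℂ × ℂ} (hz : ‖z.1‖ ^ 2 + ‖z.2‖ ^ 2 ≤ 1) : ‖PP c d z‖ ≤ u := by
  obtain ⟨x, y, hxy, e⟩ := polar z
  have h1 := h (x, y) hxy
  rw [e, PP_hom, norm_mul, norm_pow, Complex.norm_real, Real.norm_of_nonneg (Real.sqrt_nonneg _)]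
  have h2 : Real.sqrt (‖z.1‖ ^ 2 + ‖z.2‖ ^ 2) ^ d ≤ 1 :=
    pow_le_one₀ (Real.sqrt_nonneg _) (Real.sqrt_le_one.2 hz)
  nlinarith [norm_nonneg (PP c d (x, y)), Real.sqrt_nonneg (‖z.1‖ ^ 2 + ‖z.2‖ ^ 2)]

theorem fderiv_bd {P : ℂ × ℂ → ℂ} (hP : Differentiable ℂ P) {z : ℂ × ℂ} {δ u : ℝ} (hδ : 0 < δ)
    (h : ∀ w, dist w z ≤ δ → ‖P w‖ ≤ u) : ‖fderiv ℂ P z‖ ≤ u / δ := by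
  have hu : 0 ≤ u := (norm_nonneg _).trans (h z (by simp [hδ.le]))
  apply ContinuousLinearMap.opNorm_le_bound _ (by positivity)
  intro e
  by_cases he : e = 0
  · simp [he]
  have he' : 0 < ‖e‖ := norm_pos_iff.2 he
  have h1 : HasDerivAt (fun τ : ℂ => z + τ • e) e 0 := by
    have := ((hasDerivAt_id (0:ℂ)).smul_const e).const_add z
    simpa using this
  have h2 : HasDerivAt (fun τ : ℂ => P (z + τ • e)) (fderiv ℂ P z e) 0 := by
    have h3 : HasFDerivAt P (fderiv ℂ P z) (z + (0:ℂ) • e) := by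
      rw [zero_smul, add_zero]; exact (hP z).hasFDerivAt
    have := h3.comp_hasDerivAt (0 : ℂ) h1
    exact this
  have hR : 0 < δ / ‖e‖ := by positivity
  have h4 := Complex.norm_deriv_le_of_forall_mem_sphere_norm_le (f := fun τ : ℂ => P (z + τ • e)) (c := 0) (C := u) hR
    (Differentiable.diffContOnCl (by fun_prop)) (by
      intro τ hτ
      apply h
      rw [mem_sphere_zero_iff_norm] at hτ
      rw [dist_eq_norm, add_sub_cancel_left, norm_smul, hτ]
      field_simp; exact le_rfl)
  rw [h2.deriv] at h4
  calc _ ≤ _ := h4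
    _ = _ := by field_simp

theorem main_norm {g : ℂ × ℂ → ℂ} (hg : AS g) (hJ : JC g) : ∃ F : ℂ × ℂ → ℂ,
    ContinuousOn F {z | ‖z.1‖ ^ 2 + ‖z.2‖ ^ 2 ≤ 1} ∧
    DifferentiableOn ℂ F {z | ‖z.1‖ ^ 2 + ‖z.2‖ ^ 2 < 1} ∧
    ∀ z : ℂ × ℂ, ‖z.1‖ ^ 2 + ‖z.2‖ ^ 2 = 1 → F z = g z := by
  choose c hc using fd_pos hg hJ
  obtain ⟨u, hu, hub⟩ := fd_decay hg
  have hc' : ∀ (d : ℕ) (z : ℂ × ℂ), ‖z.1‖ ^ 2 + ‖z.2‖ ^ 2 = 1 → fd d g z = PP (c d) d z := hc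
  have hb : ∀ (d : ℕ) (z : ℂ × ℂ), ‖z.1‖ ^ 2 + ‖z.2‖ ^ 2 ≤ 1 → ‖PP (c d) d z‖ ≤ u d := by
    intro d z hz
    exact PP_bd (fun w hw => by rw [← hc' d w hw]; exact hub d w hw) hz
  refine ⟨fun z => 1 / (2 * Real.pi) * ∑' d, PP (c d) d z, ?_, ?_, ?_⟩
  · apply continuousOn_const.mul
    exact continuousOn_tsum (fun d => (PP_diff _ d).continuous.continuousOn) hu (fun d z hz => hb d z hz)
  · apply DifferentiableOn.const_mul
    intro z0 hz0
    apply DifferentiableAt.differentiableWithinAt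
    have hop : IsOpen {z : ℂ × ℂ | ‖z.1‖ ^ 2 + ‖z.2‖ ^ 2 < 1} := isOpen_lt (by fun_prop) continuous_const
    obtain ⟨ε, hε, hsub⟩ := Metric.isOpen_iff.1 hop z0 hz0
    have := hasFDerivAt_tsum_of_isPreconnected (𝕜 := ℂ) (f := fun d => PP (c d) d)
      (f' := fun d => fderiv ℂ (PP (c d) d)) (u := fun d => u d / (ε / 2)) (s := ball z0 (ε / 2)) (x₀ := z0) (x := z0)
      (hu.div_const _) isOpen_ball (convex_ball _ _).isPreconnected
      (fun d z _ => ((PP_diff _ d) z).hasFDerivAt)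
      (fun d z hz => by
        apply fderiv_bd (PP_diff _ d) (by positivity)
        intro w hw
        apply hb
        have : w ∈ ball z0 ε := by
          rw [mem_ball] at hz ⊢
          linarith [dist_triangle w z z0]
        exact le_of_lt (hsub this))
      (by simp [hε]) (Summable.of_norm_bounded hu (fun d => hb d z0 (le_of_lt hz0)))
      (by simp [hε])
    exact this.differentiableAt
  · intro z hz
    have hq : ∀ d : ℕ, QF (fun θ : ℝ => g (Complex.exp (θ * Complex.I) * z.1, Complex.exp (θ * Complex.I) * z.2)) d
        = PP (c d) d z := fun d => hc' d z hz
    have hinj : Function.Injective (fun d : ℕ => (d : ℤ)) := Nat.cast_injective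
    have hq0 : ∀ d : ℤ, d ∉ Set.range (fun d : ℕ => (d : ℤ)) →
        QF (fun θ : ℝ => g (Complex.exp (θ * Complex.I) * z.1, Complex.exp (θ * Complex.I) * z.2)) d = 0 := by
      intro d hd
      refine fd_neg hg hJ ?_ hz
      by_contra hlt
      exact hd ⟨d.toNat, by simp; omega⟩
    have hs : Summable fun d => PP (c d) d z := Summable.of_norm_bounded hu (fun d => hb d z hz.le)
    have := FS (rot_cont hg hz) (by intro x; simp only [ei_per]) (by
      rw [← hinj.summable_iff hq0]
      refine hs.congr ?_
      intro d; exact (hq d).symm) 0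
    have h2 : HasSum (fun d : ℕ => 1 / (2 * Real.pi) * PP (c d) d z)
      (g (Complex.exp ((0:ℝ) * Complex.I) * z.1, Complex.exp ((0:ℝ) * Complex.I) * z.2)) := by
      rw [← hinj.hasSum_iff (by intro d hd; rw [hq0 d hd]; simp)] at this
      refine this.congr_fun ?_
      intro d
      simp [hq]
    show 1 / (2 * (Real.pi : ℂ)) * ∑' d, PP (c d) d z = g z
    rw [← tsum_mul_left, h2.tsum_eq]
    simp
end

section
open Metric Set Filter
open scoped ENNReal NNReal Topology ContDiff ComplexConjugate

noncomputable def QN (z : ℂ × ℂ) : ℝ := ‖z.1‖ ^ 2 + ‖z.2‖ ^ 2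

theorem QN_nonneg (z : ℂ × ℂ) : 0 ≤ QN z := by unfold QN; positivity

theorem QN_eq_zero {z : ℂ × ℂ} (h : QN z = 0) : z = 0 := by
  unfold QN at h
  have h1 : ‖z.1‖ ^ 2 = 0 := by nlinarith [sq_nonneg ‖z.1‖, sq_nonneg ‖z.2‖]
  have h2 : ‖z.2‖ ^ 2 = 0 := by nlinarith [sq_nonneg ‖z.1‖, sq_nonneg ‖z.2‖]
  have h1' : z.1 = 0 := by simpa using h1
  have h2' : z.2 = 0 := by simpa using h2
  exact Prod.ext h1' h2'

def LX (c : ℂ × ℂ) (g : ℂ × ℂ → ℂ) : Prop := ∀ v : ℂ × ℂ, v ≠ 0 → ∃ F : ℂ → ℂ,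
  ContinuousOn F {t | QN (c + t • v) ≤ 1} ∧ DifferentiableOn ℂ F {t | QN (c + t • v) < 1} ∧
  ∀ t, QN (c + t • v) = 1 → F t = g (c + t • v)

def CON (g : ℂ × ℂ → ℂ) : Prop := ∃ F : ℂ × ℂ → ℂ,
    ContinuousOn F {z | QN z ≤ 1} ∧ DifferentiableOn ℂ F {z | QN z < 1} ∧
    ∀ z : ℂ × ℂ, QN z = 1 → F z = g z

theorem exists_U (a : ℂ × ℂ) : ∃ U : (ℂ × ℂ) ≃L[ℂ] (ℂ × ℂ), (∀ z, QN (U z) = QN z) ∧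
    U a = ((Real.sqrt (QN a) : ℂ), 0) := by
  by_cases ha : a = 0
  · refine ⟨ContinuousLinearEquiv.refl ℂ _, fun z => rfl, ?_⟩
    subst ha
    ext <;> simp [QN]
  have hN : 0 < QN a := lt_of_le_of_ne (QN_nonneg a) (fun h => ha (QN_eq_zero h.symm))
  have hs : 0 < Real.sqrt (QN a) := Real.sqrt_pos.2 hN
  set r := Real.sqrt (QN a) with hr
  have hr0 : (r : ℂ) ≠ 0 := by exact_mod_cast hs.ne'
  have hr2 : (r : ℂ) ^ 2 = a.1 * conj a.1 + a.2 * conj a.2 := by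
    rw [Complex.mul_conj', Complex.mul_conj']
    have : r ^ 2 = QN a := Real.sq_sqrt hN.le
    rw [QN] at this
    exact_mod_cast this
  obtain ⟨al, hal⟩ : ∃ x, x = conj a.1 / r := ⟨_, rfl⟩
  obtain ⟨be, hbe⟩ : ∃ x, x = conj a.2 / r := ⟨_, rfl⟩
  have cal : conj al = a.1 / r := by rw [hal]; simp
  have cbe : conj be = a.2 / r := by rw [hbe]; simp
  have hone : al * conj al + be * conj be = 1 := by
    rw [cal, cbe, hal, hbe]; field_simp; rw [hr2]; ring
  let L : (ℂ × ℂ) ≃ₗ[ℂ] (ℂ × ℂ) :=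
    { toFun := fun z => (al * z.1 + be * z.2, -conj be * z.1 + conj al * z.2)
      invFun := fun z => (conj al * z.1 - be * z.2, conj be * z.1 + al * z.2)
      map_add' := by intro x y; ext <;> simp <;> ring
      map_smul' := by intro x y; ext <;> simp <;> ring
      left_inv := by
        intro z
        ext <;> simp only
        · linear_combination z.1 * hone
        · linear_combination z.2 * hone
      right_inv := by
        intro z
        ext <;> simp only
        · linear_combination z.1 * hone
        · linear_combination z.2 * hone }
  refine ⟨L.toContinuousLinearEquiv, ?_, ?_⟩
  · intro z
    have : ((QN (al * z.1 + be * z.2, -conj be * z.1 + conj al * z.2) : ℝ) : ℂ) = ((QN z : ℝ) : ℂ) := by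
      simp only [QN]
      push_cast
      simp only [← Complex.mul_conj', map_add, map_mul, map_neg, Complex.conj_conj]
      linear_combination (z.1 * conj z.1 + z.2 * conj z.2) * hone
    exact_mod_cast this
  · show ((al * a.1 + be * a.2, -conj be * a.1 + conj al * a.2) : ℂ × ℂ) = _
    rw [cal, cbe, hal, hbe]
    ext <;> simp only
    · field_simp; rw [hr2]; ring
    · ring

theorem AS_U {g : ℂ × ℂ → ℂ} (hg : AS g) (U : (ℂ × ℂ) ≃L[ℂ] (ℂ × ℂ)) (hU : ∀ z, QN (U z) = QN z) :
    AS (fun z => g (U.symm z)) := by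
  intro z hz
  have h1 : AnalyticAt ℝ (fun z => U.symm z) z :=
    ((U.symm : (ℂ × ℂ) →L[ℂ] (ℂ × ℂ)).restrictScalars ℝ).analyticAt z
  refine AnalyticAt.fun_comp (hg (U.symm z) ?_) h1
  have := hU (U.symm z)
  rw [U.apply_symm_apply] at this
  exact this.symm.trans hz

theorem LX_U {g : ℂ × ℂ → ℂ} {c : ℂ × ℂ} (h : LX c g) (U : (ℂ × ℂ) ≃L[ℂ] (ℂ × ℂ)) (hU : ∀ z, QN (U z) = QN z) :
    LX (U c) (fun z => g (U.symm z)) := by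
  intro v hv
  obtain ⟨F, h1, h2, h3⟩ := h (U.symm v) (by simpa using hv)
  have e : ∀ t : ℂ, U c + t • v = U (c + t • U.symm v) := by intro t; simp
  refine ⟨F, ?_, ?_, ?_⟩
  · simpa only [e, hU] using h1
  · simpa only [e, hU] using h2
  · intro t ht
    rw [e, hU] at ht
    rw [h3 t ht, e]
    exact congrArg g (U.symm_apply_apply _).symm

theorem CON_U {g : ℂ × ℂ → ℂ} (U : (ℂ × ℂ) ≃L[ℂ] (ℂ × ℂ)) (hU : ∀ z, QN (U z) = QN z)
    (h : CON (fun z => g (U.symm z))) : CON g := by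
  obtain ⟨F, h1, h2, h3⟩ := h
  refine ⟨fun z => F (U z), ?_, ?_, ?_⟩
  · refine h1.comp U.continuous.continuousOn ?_
    intro z hz; exact (hU z).le.trans hz
  · refine h2.comp U.differentiable.differentiableOn ?_
    intro z hz; exact (hU z).le.trans_lt hz
  · intro z hz
    have := h3 (U z) ((hU z).trans hz)
    simpa using this

theorem LX_LH {g : ℂ × ℂ → ℂ} {p : ℝ} (h : LX ((p : ℂ), 0) g) : LH p g := by
  intro l
  obtain ⟨F, h1, h2, h3⟩ := h (1, l) (by intro h; simp [Prod.ext_iff] at h)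
  have e : ∀ t : ℂ, (((p : ℂ), (0:ℂ)) : ℂ × ℂ) + t • ((1 : ℂ), l) = ((p : ℂ) + t, l * t) := by
    intro t; ext <;> simp [mul_comm]
  simp only [e, QN] at h1 h2 h3
  exact ⟨F, h1, h2, h3⟩
end

section
open Metric Set Filter
open scoped ENNReal NNReal Topology ContDiff ComplexConjugate

noncomputable def psi (a : ℝ) (w : ℂ × ℂ) : ℂ × ℂ :=
  ((w.1 + a) / (1 + a * w.1), (Real.sqrt (1 - a ^ 2) : ℂ) * w.2 / (1 + a * w.1))

theorem psi_den {a : ℝ} (ha : |a| < 1) {w : ℂ × ℂ} (hw : QN w ≤ 1) : 1 + (a : ℂ) * w.1 ≠ 0 := by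
  intro h
  have h1 : (a : ℂ) * w.1 = -1 := by linear_combination h
  have h2 : |a| * ‖w.1‖ = 1 := by
    have := congrArg norm h1
    simpa using this
  have h3 : ‖w.1‖ ≤ 1 := by
    unfold QN at hw
    nlinarith [norm_nonneg w.1, sq_nonneg ‖w.2‖]
  nlinarith [abs_nonneg a, norm_nonneg w.1]

theorem one_sub_sq {a : ℝ} (ha : |a| < 1) : 0 < 1 - a ^ 2 := by
  rw [← sq_abs]; nlinarith [abs_nonneg a]

theorem psi_QN {a : ℝ} (ha : |a| < 1) {w : ℂ × ℂ} (hw : QN w ≤ 1) :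
    1 - QN (psi a w) = (1 - a ^ 2) * (1 - QN w) / ‖1 + (a : ℂ) * w.1‖ ^ 2 := by
  have hD := psi_den ha hw
  have hD' : ‖1 + (a : ℂ) * w.1‖ ^ 2 ≠ 0 := by simpa using hD
  have hs : Real.sqrt (1 - a ^ 2) ^ 2 = 1 - a ^ 2 := Real.sq_sqrt (one_sub_sq ha).le
  unfold QN psi
  simp only [norm_div, norm_mul, div_pow, mul_pow, Complex.norm_real, Real.norm_eq_abs, sq_abs, hs]
  rw [eq_div_iff hD', ← add_div, sub_mul, div_mul_cancel₀ _ hD']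
  simp only [← Complex.normSq_eq_norm_sq, Complex.normSq_apply]
  simp
  ring

theorem psi_le {a : ℝ} (ha : |a| < 1) {w : ℂ × ℂ} (hw : QN w ≤ 1) : QN (psi a w) ≤ 1 := by
  have h := psi_QN ha hw
  have h1 := one_sub_sq ha
  have : 0 ≤ 1 - QN (psi a w) := by
    rw [h]; apply div_nonneg _ (by positivity); apply mul_nonneg h1.le; linarith
  linarith

theorem psi_lt {a : ℝ} (ha : |a| < 1) {w : ℂ × ℂ} (hw : QN w < 1) : QN (psi a w) < 1 := by
  have h := psi_QN ha hw.le
  have h1 := one_sub_sq ha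
  have h2 := norm_pos_iff.2 (psi_den ha hw.le)
  have : 0 < 1 - QN (psi a w) := by
    rw [h]; apply div_pos _ (by positivity); apply mul_pos h1; linarith
  linarith

theorem psi_eq {a : ℝ} (ha : |a| < 1) {w : ℂ × ℂ} (hw : QN w = 1) : QN (psi a w) = 1 := by
  have h := psi_QN ha hw.le
  rw [hw] at h
  simp at h
  linarith

theorem psi_psi {a : ℝ} (ha : |a| < 1) {w : ℂ × ℂ} (hw : QN w ≤ 1) : psi a (psi (-a) w) = w := by
  have hD := psi_den (a := -a) (by rwa [abs_neg]) hw
  have hD2 := psi_den ha (psi_le (a := -a) (by rwa [abs_neg]) hw)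
  have hs : (Real.sqrt (1 - a ^ 2) : ℂ) ^ 2 = 1 - (a : ℂ) ^ 2 := by
    exact_mod_cast Real.sq_sqrt (one_sub_sq ha).le
  have h1 : (1 : ℂ) - (a : ℂ) ^ 2 ≠ 0 := by exact_mod_cast (one_sub_sq ha).ne'
  unfold psi at hD2 ⊢
  simp only [Complex.ofReal_neg, neg_sq] at hD hD2 ⊢
  have e : 1 + (a : ℂ) * ((w.1 + -a) / (1 + -a * w.1)) = (1 - (a : ℂ) ^ 2) / (1 + -a * w.1) := by
    rw [eq_div_iff hD, add_mul, mul_assoc, div_mul_cancel₀ _ hD]; ring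
  rw [e]
  ext <;> simp only
  · rw [div_add' _ _ _ hD, div_div_div_cancel_right₀ hD, div_eq_iff h1]; ring
  · rw [← mul_div_assoc, div_div_div_cancel_right₀ hD, div_eq_iff h1]; linear_combination w.2 * hs

theorem psi_AS {g : ℂ × ℂ → ℂ} (hg : AS g) {a : ℝ} (ha : |a| < 1) : AS (fun z => g (psi a z)) := by
  intro z hz
  have hD := psi_den ha (w := z) hz.le
  refine AnalyticAt.fun_comp (hg (psi a z) (psi_eq ha hz)) ?_
  have f1 : AnalyticAt ℝ (fun w : ℂ × ℂ => w.1) z := analyticAt_fst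
  have f2 : AnalyticAt ℝ (fun w : ℂ × ℂ => w.2) z := analyticAt_snd
  have hd : AnalyticAt ℝ (fun w : ℂ × ℂ => 1 + (a : ℂ) * w.1) z := analyticAt_const.add (analyticAt_const.mul f1)
  exact ((f1.add analyticAt_const).div hd hD).prod ((analyticAt_const.mul f2).div hd hD)

theorem psi_diffAt {a : ℝ} {z : ℂ × ℂ} (hD : 1 + (a : ℂ) * z.1 ≠ 0) : DifferentiableAt ℂ (psi a) z := by
  unfold psi
  fun_prop (disch := assumption)

theorem psi_CON {g : ℂ × ℂ → ℂ} {a : ℝ} (ha : |a| < 1) (h : CON (fun z => g (psi a z))) : CON g := by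
  have ha' : |-a| < 1 := by rwa [abs_neg]
  obtain ⟨F, h1, h2, h3⟩ := h
  refine ⟨fun z => F (psi (-a) z), ?_, ?_, ?_⟩
  · refine h1.comp ?_ (fun z hz => psi_le ha' hz)
    intro z hz
    exact (psi_diffAt (psi_den ha' hz)).continuousAt.continuousWithinAt
  · refine h2.comp ?_ (fun z hz => psi_lt ha' hz)
    intro z hz
    exact (psi_diffAt (psi_den ha' (le_of_lt hz))).differentiableWithinAt
  · intro z hz
    have := h3 _ (psi_eq ha' hz)
    simp only [psi_psi ha hz.le] at this
    exact this

theorem psi_LX {g : ℂ × ℂ → ℂ} {a : ℝ} (ha : |a| < 1) {c : ℂ × ℂ} (hc : QN c ≤ 1)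
    (h : LX (psi a c) g) : LX c (fun z => g (psi a z)) := by
  intro v hv
  have hD0 := psi_den ha hc
  have hs : (Real.sqrt (1 - a ^ 2) : ℂ) ≠ 0 := by
    exact_mod_cast (Real.sqrt_pos.2 (one_sub_sq ha)).ne'
  have h1a : (1 : ℂ) - (a : ℂ) ^ 2 ≠ 0 := by exact_mod_cast (one_sub_sq ha).ne'
  obtain ⟨F, h1, h2, h3⟩ := h (v.1 * (1 - (a : ℂ) ^ 2) / (1 + a * c.1),
    (Real.sqrt (1 - a ^ 2) : ℂ) * (v.2 * (1 + a * c.1) - c.2 * (a * v.1)) / (1 + a * c.1)) (by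
      intro h0
      apply hv
      simp only [Prod.ext_iff, Prod.fst_zero, Prod.snd_zero, div_eq_zero_iff, mul_eq_zero, hD0, hs, h1a,
        or_false, false_or] at h0
      obtain ⟨e1, e2⟩ := h0
      rw [e1] at e2
      simp [hD0] at e2
      exact Prod.ext e1 e2)
  have e : ∀ t : ℂ, QN (c + t • v) ≤ 1 → psi a c + (t / (1 + a * (c + t • v).1)) •
      ((v.1 * (1 - (a : ℂ) ^ 2) / (1 + a * c.1),
    (Real.sqrt (1 - a ^ 2) : ℂ) * (v.2 * (1 + a * c.1) - c.2 * (a * v.1)) / (1 + a * c.1)) : ℂ × ℂ) = psi a (c + t • v) := by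
    intro t ht
    have hD := psi_den ha ht
    unfold psi
    simp only [Prod.fst_add, Prod.snd_add, Prod.smul_fst, Prod.smul_snd, smul_eq_mul] at hD ⊢
    refine Prod.ext ?_ ?_
    · show (c.1 + a) / (1 + a * c.1) + t / (1 + a * (c.1 + t * v.1)) * (v.1 * (1 - (a : ℂ) ^ 2) / (1 + a * c.1))
        = (c.1 + t * v.1 + a) / (1 + a * (c.1 + t * v.1))
      rw [div_mul_div_comm, div_add_div _ _ hD0 (mul_ne_zero hD hD0),
        div_eq_div_iff (mul_ne_zero hD0 (mul_ne_zero hD hD0)) hD]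
      ring
    · show (Real.sqrt (1 - a ^ 2) : ℂ) * c.2 / (1 + a * c.1) + t / (1 + a * (c.1 + t * v.1)) *
        ((Real.sqrt (1 - a ^ 2) : ℂ) * (v.2 * (1 + a * c.1) - c.2 * (a * v.1)) / (1 + a * c.1))
        = (Real.sqrt (1 - a ^ 2) : ℂ) * (c.2 + t * v.2) / (1 + a * (c.1 + t * v.1))
      rw [div_mul_div_comm, div_add_div _ _ hD0 (mul_ne_zero hD hD0),
        div_eq_div_iff (mul_ne_zero hD0 (mul_ne_zero hD hD0)) hD]
      ring
  have hm : ∀ t : ℂ, QN (c + t • v) ≤ 1 → DifferentiableAt ℂ (fun t : ℂ => t / (1 + a * (c + t • v).1)) t := by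
    intro t ht
    have hD := psi_den ha ht
    simp only [Prod.fst_add, Prod.smul_fst, smul_eq_mul] at hD ⊢
    fun_prop (disch := assumption)
  refine ⟨fun t => F (t / (1 + a * (c + t • v).1)), ?_, ?_, ?_⟩
  · refine h1.comp (fun t ht => (hm t ht).continuousAt.continuousWithinAt) ?_
    intro t ht
    show QN _ ≤ 1
    rw [e t ht]; exact psi_le ha ht
  · refine h2.comp (fun t ht => (hm t (le_of_lt ht)).differentiableWithinAt) ?_
    intro t ht
    show QN _ < 1
    rw [e t (le_of_lt ht)]; exact psi_lt ha ht
  · intro t ht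
    have := h3 (t / (1 + a * (c + t • v).1)) (by rw [e t ht.le]; exact psi_eq ha ht)
    rw [e t ht.le] at this
    exact this

theorem main_pair {g : ℂ × ℂ → ℂ} (hg : AS g) {a b : ℂ × ℂ} (hab : a ≠ b) (ha : QN a ≤ 1) (hb : QN b ≤ 1)
    (la : LX a g) (lb : LX b g) : CON g := by
  obtain ⟨U, hU, hUa⟩ := exists_U a
  apply CON_U U hU
  have la1 := LX_U la U hU
  have lb1 := LX_U lb U hU
  have g1 := AS_U hg U hU
  rw [hUa] at la1
  have hUb : QN (U b) ≤ 1 := (hU b).le.trans hb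
  have hne : U b ≠ ((Real.sqrt (QN a) : ℂ), 0) := by
    rw [← hUa]; intro h; exact hab (U.injective h).symm
  generalize U b = b1 at *
  generalize (fun z => g (U.symm z)) = k at *
  rcases ha.eq_or_lt with h | h
  · rw [h, Real.sqrt_one] at la1
    exact main_norm g1 (JC_II g1 (LX_LH la1))
  have hs0 := Real.sqrt_nonneg (QN a)
  have hs1 : |Real.sqrt (QN a)| < 1 := by
    rw [abs_of_nonneg hs0, Real.sqrt_lt' one_pos]; simpa using h
  generalize Real.sqrt (QN a) = s at *
  have hs1' : |-s| < 1 := by rwa [abs_neg]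
  apply psi_CON hs1
  have g2 := psi_AS g1 hs1
  have la2 : LX 0 (fun z => k (psi s z)) := by
    apply psi_LX hs1 (by simp [QN])
    convert la1 using 1
    ext <;> simp [psi]
  have lb2 : LX (psi (-s) b1) (fun z => k (psi s z)) := by
    apply psi_LX hs1 (psi_le hs1' hUb)
    rw [psi_psi hs1 hUb]; exact lb1
  have hb2 := psi_le hs1' hUb
  have hne2 : psi (-s) b1 ≠ 0 := by
    intro h
    apply hne
    rw [← psi_psi hs1 hUb, h]
    ext <;> simp [psi]
  generalize psi (-s) b1 = b2 at *
  generalize (fun z => k (psi s z)) = m at *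
  obtain ⟨V, hV, hVb⟩ := exists_U b2
  apply CON_U V hV
  have la3 := LX_U la2 V hV
  have lb3 := LX_U lb2 V hV
  have g3 := AS_U g2 V hV
  rw [hVb] at lb3
  have hz : V 0 = (((0 : ℝ) : ℂ), 0) := by rw [map_zero]; ext <;> simp
  rw [hz] at la3
  have hpos : 0 < QN b2 := lt_of_le_of_ne (QN_nonneg _) (fun h => hne2 (QN_eq_zero h.symm))
  exact main_norm g3 (JC_I g3 (Real.sqrt_pos.2 hpos) (Real.sqrt_le_one.2 hb2) (LX_LH la3) (LX_LH lb3))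
end

section
open Metric Set Filter
open scoped ENNReal NNReal Topology ContDiff ComplexConjugate

theorem final_E
    (a b : EuclideanSpace ℂ (Fin 2))
    (ha : a ∈ closedBall (0 : EuclideanSpace ℂ (Fin 2)) 1)
    (hb : b ∈ closedBall (0 : EuclideanSpace ℂ (Fin 2)) 1)
    (hab : a ≠ b)
    (f : EuclideanSpace ℂ (Fin 2) → ℂ)
    (hf : ∃ (U : Set (EuclideanSpace ℂ (Fin 2))) (g : EuclideanSpace ℂ (Fin 2) → ℂ),
      IsOpen U ∧ sphere (0 : EuclideanSpace ℂ (Fin 2)) 1 ⊆ U ∧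
      AnalyticOnNhd ℝ g U ∧ EqOn f g (sphere (0 : EuclideanSpace ℂ (Fin 2)) 1))
    (hext : ∀ c ∈ ({a, b} : Set (EuclideanSpace ℂ (Fin 2))),
      ∀ v : EuclideanSpace ℂ (Fin 2), v ≠ 0 →
      ∃ F : ℂ → ℂ,
        ContinuousOn F {t : ℂ | ‖c + t • v‖ ≤ 1} ∧
        DifferentiableOn ℂ F {t : ℂ | ‖c + t • v‖ < 1} ∧
        ∀ t : ℂ, ‖c + t • v‖ = 1 → F t = f (c + t • v)) :
    ∃ F : EuclideanSpace ℂ (Fin 2) → ℂ,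
      ContinuousOn F (closedBall (0 : EuclideanSpace ℂ (Fin 2)) 1) ∧
      DifferentiableOn ℂ F (ball (0 : EuclideanSpace ℂ (Fin 2)) 1) ∧
      EqOn F f (sphere (0 : EuclideanSpace ℂ (Fin 2)) 1) := by
  obtain ⟨W, g, hW, hSW, hg, hfg⟩ := hf
  obtain ⟨E, hE⟩ : ∃ E : EuclideanSpace ℂ (Fin 2) ≃L[ℂ] (ℂ × ℂ), ∀ x, QN (E x) = ‖x‖ ^ 2 := by
    refine ⟨(EuclideanSpace.equiv (Fin 2) ℂ).trans (ContinuousLinearEquiv.finTwoArrow ℂ ℂ), fun x => ?_⟩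
    rw [EuclideanSpace.norm_sq_eq, Fin.sum_univ_two]
    rfl
  have hle : ∀ x, QN (E x) ≤ 1 ↔ ‖x‖ ≤ 1 := by
    intro x; rw [hE, sq_le_one_iff₀ (norm_nonneg _)]
  have hlt : ∀ x, QN (E x) < 1 ↔ ‖x‖ < 1 := by
    intro x; rw [hE, sq_lt_one_iff₀ (norm_nonneg _)]
  have heq : ∀ x, QN (E x) = 1 ↔ ‖x‖ = 1 := by
    intro x; rw [hE, pow_eq_one_iff_of_nonneg (norm_nonneg _) two_ne_zero]
  have gAS : AS (fun z => g (E.symm z)) := by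
    intro z hz
    have h1 : AnalyticAt ℝ (fun z => E.symm z) z :=
      ((E.symm : (ℂ × ℂ) →L[ℂ] EuclideanSpace ℂ (Fin 2)).restrictScalars ℝ).analyticAt z
    refine AnalyticAt.fun_comp (hg (E.symm z) (hSW ?_)) h1
    rw [mem_sphere_zero_iff_norm, ← heq, E.apply_symm_apply]
    exact hz
  have lx : ∀ c ∈ ({a, b} : Set (EuclideanSpace ℂ (Fin 2))), LX (E c) (fun z => g (E.symm z)) := by
    intro c hc v hv
    obtain ⟨F, h1, h2, h3⟩ := hext c hc (E.symm v) (by simpa using hv)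
    have e : ∀ t : ℂ, E c + t • v = E (c + t • E.symm v) := by intro t; simp
    refine ⟨F, ?_, ?_, ?_⟩
    · simpa only [e, hle] using h1
    · simpa only [e, hlt] using h2
    · intro t ht
      rw [e, heq] at ht
      rw [h3 t ht, hfg (mem_sphere_zero_iff_norm.2 ht), e]
      exact congrArg g (E.symm_apply_apply _).symm
  obtain ⟨F, h1, h2, h3⟩ := main_pair gAS (fun h => hab (E.injective h))
    ((hle a).2 (mem_closedBall_zero_iff.1 ha)) ((hle b).2 (mem_closedBall_zero_iff.1 hb))
    (lx a (by simp)) (lx b (by simp))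
  refine ⟨fun x => F (E x), ?_, ?_, ?_⟩
  · refine h1.comp E.continuous.continuousOn ?_
    intro x hx; exact (hle x).2 (mem_closedBall_zero_iff.1 hx)
  · refine h2.comp E.differentiable.differentiableOn ?_
    intro x hx; exact (hlt x).2 (mem_ball_zero_iff.1 hx)
  · intro x hx
    have := h3 (E x) ((heq x).2 (mem_sphere_zero_iff_norm.1 hx))
    simp only [E.symm_apply_apply] at this
    exact this.trans (hfg hx).symm
end

/-- **Theorem (main).** Let `a, b` be two distinct points of the closed unit
ball of `ℂ²`.  If `f` is a real-analytic function on the unit sphere (i.e. the restriction to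
the sphere of a function real-analytic in a neighborhood of the sphere) which, on every
complex line `L` through `a` or through `b`, agrees on `L ∩ ∂B²` with a function continuous
on `L ∩ cl B²` and holomorphic on `L ∩ B²`, then `f` is the boundary value of a function
continuous on the closed ball and holomorphic in the open ball. -/
theorem holomorphic_extension_from_two_bunches_dim_two
    
    (a b : EuclideanSpace ℂ (Fin 2))
    (ha : a ∈ closedBall (0 : EuclideanSpace ℂ (Fin 2)) 1)
    (hb : b ∈ closedBall (0 : EuclideanSpace ℂ (Fin 2)) 1)
    (hab : a ≠ b)
    (f : EuclideanSpace ℂ (Fin 2) → ℂ)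
    -- `f` is real-analytic on the sphere: it is the restriction of a function
    -- real-analytic in a neighborhood of the sphere
    (hf : ∃ (U : Set (EuclideanSpace ℂ (Fin 2))) (g : EuclideanSpace ℂ (Fin 2) → ℂ),
      IsOpen U ∧ sphere (0 : EuclideanSpace ℂ (Fin 2)) 1 ⊆ U ∧
      AnalyticOnNhd ℝ g U ∧ EqOn f g (sphere (0 : EuclideanSpace ℂ (Fin 2)) 1))
    -- one-dimensional holomorphic extension along every complex line through `a` or `b`
    (hext : ∀ c ∈ ({a, b} : Set (EuclideanSpace ℂ (Fin 2))),
      ∀ v : EuclideanSpace ℂ (Fin 2), v ≠ 0 →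
      ∃ F : ℂ → ℂ,
        ContinuousOn F {t : ℂ | ‖c + t • v‖ ≤ 1} ∧
        DifferentiableOn ℂ F {t : ℂ | ‖c + t • v‖ < 1} ∧
        ∀ t : ℂ, ‖c + t • v‖ = 1 → F t = f (c + t • v)) :
    ∃ F : EuclideanSpace ℂ (Fin 2) → ℂ,
      ContinuousOn F (closedBall (0 : EuclideanSpace ℂ (Fin 2)) 1) ∧
      DifferentiableOn ℂ F (ball (0 : EuclideanSpace ℂ (Fin 2)) 1) ∧
      EqOn F f (sphere (0 : EuclideanSpace ℂ (Fin 2)) 1) := by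
  exact final_E a b ha hb hab f hf hext
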